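/- arXiv:1602.02961 — 3 statements merged into one kernel-verified Lean document; each statement's English description precedes it below -/
import Mathlib

section
/- Let N ≥ 2, Ω ⊆ ℝ^N an open set containing the segment L = {0}^{N−1} × [−1, 1], and u : Ω → ℝ^N a Lebesgue measurable vector field with |u| = 1 a.e. satisfying the kinetic formulation. Then there exists a Lebesgue measurable function ũ : (−1, 1) → ℝ^N (the trace of u on L) such that: (i) lim_{r→0⁺} ⨍_{(−r,r)^{N−1}} ∫_{−1}^{1} |u(x′, x_N) − ũ(x_N)| dx_N dx′ = 0; (ii) |ũ(x_N)| = 1 for a.e. x_N ∈ (−1, 1) and ũ(x_N) = lim_{r→0⁺} ⨍_{(−r,r)^{N−1}} u(x′, x_N) dx′ for a.e. x_N; (iii) whenever a point x = (0, …, 0, x_N) ∈ L with x_N ∈ (−1,1) is a Lebesgue point of u with value u(x), then x_N is a Lebesgue point of ũ with value ũ(x_N) = u(x). -/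
open MeasureTheory Metric Set Filter
open scoped RealInnerProductSpace ENNReal Topology

noncomputable section

/-- `χ(x, ξ) = 1` if `u(x)·ξ > 0` and `0` otherwise. -/
def chi {N : ℕ} (u : EuclideanSpace ℝ (Fin N) → EuclideanSpace ℝ (Fin N))
    (x ξ : EuclideanSpace ℝ (Fin N)) : ℝ :=
  if 0 < ⟪u x, ξ⟫ then 1 else 0

/-- The kinetic formulation: for every unit direction `ξ`, every `v ⊥ ξ` and every
test function `φ ∈ C_c^∞(Ω)`, `∫_Ω χ(x,ξ) (v·∇φ(x)) dx = 0`. -/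
def KineticFormulation {N : ℕ} (Ω : Set (EuclideanSpace ℝ (Fin N)))
    (u : EuclideanSpace ℝ (Fin N) → EuclideanSpace ℝ (Fin N)) : Prop :=
  ∀ ξ : EuclideanSpace ℝ (Fin N), ‖ξ‖ = 1 →
    ∀ v : EuclideanSpace ℝ (Fin N), ⟪v, ξ⟫ = 0 →
      ∀ φ : EuclideanSpace ℝ (Fin N) → ℝ, ContDiff ℝ (⊤ : ℕ∞) φ → HasCompactSupport φ →
        tsupport φ ⊆ Ω →
        ∫ x in Ω, chi u x ξ * ⟪v, gradient φ x⟫ = 0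

/-- `x₀` is a Lebesgue point of `f` with value `f₀`. -/
def IsLebesguePoint {E : Type*} [MeasureSpace E] [PseudoMetricSpace E]
    {F : Type*} [NormedAddCommGroup F]
    (f : E → F) (x₀ : E) (f₀ : F) : Prop :=
  Tendsto (fun r : ℝ => ⨍ x in Metric.ball x₀ r, ‖f x - f₀‖) (𝓝[>] 0) (𝓝 0)

/-- The point of the Euclidean space whose first N-1 coordinates are given by y and whose
last coordinate is t. -/
def ins (N : ℕ) (y : Fin (N - 1) → ℝ) (t : ℝ) : EuclideanSpace ℝ (Fin N) :=
  (WithLp.equiv 2 (Fin N → ℝ)).symm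
    (fun j => if h : (j : ℕ) < N - 1 then y ⟨j, h⟩ else t)

/-- The open cube of half-side r in the first N-1 variables. -/
def cube (N : ℕ) (r : ℝ) : Set (Fin (N - 1) → ℝ) :=
  Set.univ.pi fun _ => Ioo (-r) r



lemma chi_meas {N : ℕ} {u : EuclideanSpace ℝ (Fin N) → EuclideanSpace ℝ (Fin N)}
    (hmeas : Measurable u) (ξ : EuclideanSpace ℝ (Fin N)) : Measurable (fun x => chi u x ξ) := by
  unfold chi
  refine Measurable.ite ?_ measurable_const measurable_const
  exact measurableSet_lt measurable_const (by fun_prop)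

lemma chi_nonneg {N : ℕ} (u : EuclideanSpace ℝ (Fin N) → EuclideanSpace ℝ (Fin N))
    (x ξ : EuclideanSpace ℝ (Fin N)) : 0 ≤ chi u x ξ := by
  unfold chi; split_ifs <;> norm_num

lemma chi_le_one {N : ℕ} (u : EuclideanSpace ℝ (Fin N) → EuclideanSpace ℝ (Fin N))
    (x ξ : EuclideanSpace ℝ (Fin N)) : chi u x ξ ≤ 1 := by
  unfold chi; split_ifs <;> norm_num

lemma isOpen_shiftable {N : ℕ} {Ω : Set (EuclideanSpace ℝ (Fin N))} (hΩ : IsOpen Ω)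
    (h : EuclideanSpace ℝ (Fin N)) :
    IsOpen {x | ∀ s ∈ Icc (0:ℝ) 1, x + s • h ∈ Ω} := by
  rw [isOpen_iff_eventually]
  intro x hx
  refine (isCompact_Icc (a := (0:ℝ)) (b := 1)).eventually_forall_of_forall_eventually ?_
  intro s hs
  have hc : Continuous (fun z : EuclideanSpace ℝ (Fin N) × ℝ => z.1 + z.2 • h) := by fun_prop
  exact hc.continuousAt.eventually (hΩ.mem_nhds (hx s hs))

lemma bdd_locInt {E : Type*} [NormedAddCommGroup E] [MeasurableSpace E] [BorelSpace E]
    {μ : Measure E} [IsLocallyFiniteMeasure μ] {f : E → ℝ} (hf : Measurable f) (C : ℝ)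
    (hb : ∀ x, ‖f x‖ ≤ C) : LocallyIntegrable f μ := by
  refine (locallyIntegrable_const C).mono hf.aestronglyMeasurable ?_
  filter_upwards with x
  exact (hb x).trans (le_abs_self C)

/-- Local invariance of `χ(·, ξ)` under translations orthogonal to `ξ`. -/
lemma chi_shift {N : ℕ} {Ω : Set (EuclideanSpace ℝ (Fin N))} (hΩ : IsOpen Ω)
    {u : EuclideanSpace ℝ (Fin N) → EuclideanSpace ℝ (Fin N)} (hmeas : Measurable u)
    (hkin : KineticFormulation Ω u) {ξ : EuclideanSpace ℝ (Fin N)} (hξ : ‖ξ‖ = 1)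
    {h : EuclideanSpace ℝ (Fin N)} (hh : ⟪h, ξ⟫ = 0) :
    ∀ᵐ x, (∀ s ∈ Icc (0:ℝ) 1, x + s • h ∈ Ω) → chi u (x + h) ξ = chi u x ξ := by
  set f : EuclideanSpace ℝ (Fin N) → ℝ := Ω.indicator (fun x => chi u x ξ) with hf
  have hfm : Measurable f := (chi_meas hmeas ξ).indicator hΩ.measurableSet
  have hfb : ∀ x, ‖f x‖ ≤ 1 := by
    intro x
    rw [hf]; unfold Set.indicator
    split_ifs
    · rw [Real.norm_eq_abs, abs_of_nonneg (chi_nonneg _ _ _)]; exact chi_le_one _ _ _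
    · simp
  have hfl : LocallyIntegrable f volume := bdd_locInt hfm 1 hfb
  set S := {x : EuclideanSpace ℝ (Fin N) | ∀ s ∈ Icc (0:ℝ) 1, x + s • h ∈ Ω} with hS
  have key : ∀ᵐ x, x ∈ S → f (x + h) - f x = 0 := by
    refine (isOpen_shiftable hΩ h).ae_eq_zero_of_integral_contDiff_smul_eq_zero ?_ ?_
    · refine (bdd_locInt (C := 2) ((hfm.comp (measurable_add_const h)).sub hfm) ?_).locallyIntegrableOn _
      intro x
      have := norm_sub_le (f (x + h)) (f x)
      have h1 := hfb (x + h)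
      have h2 := hfb x
      simp only [Pi.sub_apply, Function.comp_apply]
      linarith
    intro φ hφ hφc hφS
    -- the convolution
    set g : EuclideanSpace ℝ (Fin N) → ℝ := fun x => φ (-x) with hg
    have hgc : HasCompactSupport g := hφc.comp_homeomorph (Homeomorph.neg _)
    have hgd : ContDiff ℝ 1 g := (hφ.comp contDiff_neg).of_le (by exact_mod_cast le_top)
    set L := ContinuousLinearMap.lsmul ℝ ℝ (E := ℝ)
    set F : ℝ → ℝ := fun s => convolution f g L volume (s • h) with hF
    have hFs : ∀ s, F s = ∫ x, f x * φ (x - s • h) := by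
      intro s
      simp [hF, convolution, L, hg]
    have hder : ∀ s ∈ Icc (0:ℝ) 1, HasDerivAt F 0 s := by
      intro s hs
      have h1 := hgc.hasFDerivAt_convolution_right L hfl hgd (s • h)
      have h2 : HasDerivAt (fun s : ℝ => s • h) h s := by
        simpa using (hasDerivAt_id s).smul_const h
      have h3 := h1.comp_hasDerivAt s h2
      rw [convolution_precompR_apply L hfl (hgc.fderiv ℝ) (hgd.continuous_fderiv one_ne_zero)] at h3
      have h4 : convolution f (fun a => fderiv ℝ g a h) L volume (s • h) = 0 := by
        have hfd : ∀ a, fderiv ℝ g a h = - fderiv ℝ φ (-a) h := by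
          intro a
          have hd : HasFDerivAt φ (fderiv ℝ φ (-a)) (-a) :=
            (hφ.differentiable (by simp) (-a)).hasFDerivAt
          have hd2 := hd.comp a (hasFDerivAt_id (𝕜 := ℝ) a).neg
          have hd3 : fderiv ℝ g a = _ := hd2.fderiv
          rw [hd3]
          simp
        set ψ : EuclideanSpace ℝ (Fin N) → ℝ := fun x => φ (x - s • h) with hψ
        have hψd : ContDiff ℝ (⊤ : ℕ∞) ψ := hφ.comp (contDiff_id.sub contDiff_const)
        have hψc : HasCompactSupport ψ := by
          have := hφc.comp_homeomorph (Homeomorph.subRight (s • h))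
          exact this
        have hψS : tsupport ψ ⊆ Ω := by
          have : tsupport ψ = (Homeomorph.subRight (s • h)) ⁻¹' tsupport φ := by
            have := tsupport_comp_eq_preimage φ (Homeomorph.subRight (s • h))
            exact this
          rw [this]
          intro x hx
          have := hφS hx
          have := this s hs
          simpa using this
        have h5 := hkin ξ hξ h hh ψ hψd hψc hψS
        have h6 : ∀ x, ⟪h, gradient ψ x⟫ = fderiv ℝ φ (x - s • h) h := by
          intro x
          rw [real_inner_comm, gradient, InnerProductSpace.toDual_symm_apply]
          have hd : HasFDerivAt φ (fderiv ℝ φ (x - s • h)) (x - s • h) :=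
            (hφ.differentiable (by simp) _).hasFDerivAt
          have hd2 := hd.comp x ((hasFDerivAt_id (𝕜 := ℝ) x).sub_const (s • h))
          have hd3 : fderiv ℝ ψ x = _ := hd2.fderiv
          rw [hd3]
          simp
        rw [← integral_indicator hΩ.measurableSet] at h5
        have h7 : convolution f (fun a => fderiv ℝ g a h) L volume (s • h)
            = - ∫ x, Ω.indicator (fun x => chi u x ξ * ⟪h, gradient ψ x⟫) x := by
          rw [← integral_neg]
          unfold convolution
          congr 1
          ext x
          show L (f x) (fderiv ℝ g (s • h - x) h) = _
          rw [hfd]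
          simp only [L, ContinuousLinearMap.lsmul_apply, hf, smul_eq_mul]
          by_cases hx : x ∈ Ω
          · simp [hx, h6]
          · simp [hx]
        rw [h7, h5, neg_zero]
      rw [h4] at h3
      exact h3
    have hconst : F 1 = F 0 := by
      refine constant_of_has_deriv_right_zero (a := 0) (b := 1) ?_ ?_ 1 (by simp)
      · intro s hs; exact (hder s hs).continuousAt.continuousWithinAt
      · intro s hs; exact (hder s ⟨hs.1, hs.2.le⟩).hasDerivWithinAt
    rw [hFs, hFs] at hconst
    have hφi : Integrable φ := hφ.continuous.integrable_of_hasCompactSupport hφc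
    have e1 : ∫ x, f x * φ (x - (1:ℝ) • h) = ∫ x, f (x + h) * φ x := by
      rw [← integral_add_right_eq_self (fun x => f x * φ (x - (1:ℝ) • h)) h]
      simp
    have i1 : Integrable (fun x => f (x + h) * φ x) :=
      hφi.bdd_mul (hfm.comp (measurable_add_const h)).aestronglyMeasurable
        (c := 1) (by filter_upwards with x; exact hfb _)
    have i2 : Integrable (fun x => f x * φ x) :=
      hφi.bdd_mul hfm.aestronglyMeasurable
        (c := 1) (by filter_upwards with x; exact hfb _)
    have : ∀ x, φ x • (f (x + h) - f x) = f (x + h) * φ x - f x * φ x := by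
      intro x; simp only [smul_eq_mul]; ring
    simp_rw [this]
    rw [integral_sub i1 i2, ← e1, hconst]
    simp
  filter_upwards [key] with x hx hxS
  have h1 := hx hxS
  have m0 : x ∈ Ω := by simpa using hxS 0 (by simp)
  have m1 : x + h ∈ Ω := by simpa using hxS 1 (by simp)
  simp only [hf, Set.indicator_of_mem m0, Set.indicator_of_mem m1] at h1
  linarith


/-- The sign function `ch v ξ = 1` if `v·ξ > 0`, else `0`. -/
def ch {N : ℕ} (v ξ : EuclideanSpace ℝ (Fin N)) : ℝ := if 0 < ⟪v, ξ⟫ then 1 else 0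

lemma ch_nonneg {N : ℕ} (v ξ : EuclideanSpace ℝ (Fin N)) : 0 ≤ ch v ξ := by
  unfold ch; split_ifs <;> norm_num

lemma ch_le_one {N : ℕ} (v ξ : EuclideanSpace ℝ (Fin N)) : ch v ξ ≤ 1 := by
  unfold ch; split_ifs <;> norm_num

lemma ch_meas {N : ℕ} (ξ : EuclideanSpace ℝ (Fin N)) : Measurable (fun v => ch v ξ) := by
  unfold ch
  refine Measurable.ite ?_ measurable_const measurable_const
  exact measurableSet_lt measurable_const (by fun_prop)

/-- A finite family of directions separates points of the sphere at distance `≥ ε`. -/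
def SepFam {N : ℕ} (ε : ℝ) (F : Finset (EuclideanSpace ℝ (Fin N))) : Prop :=
  ∀ p q : EuclideanSpace ℝ (Fin N), ‖p‖ = 1 → ‖q‖ = 1 → ε ≤ ‖p - q‖ →
    ∃ ξ ∈ F, 0 < ⟪p, ξ⟫ ∧ ⟪q, ξ⟫ < 0

lemma exists_dir {N : ℕ} (k : Fin N) {p q : EuclideanSpace ℝ (Fin N)} (hp : ‖p‖ = 1)
    (hq : ‖q‖ = 1) (hpq : p ≠ q) :
    ∃ ξ : EuclideanSpace ℝ (Fin N), (‖ξ‖ = 1 ∧ ξ k ≠ 0) ∧ 0 < ⟪p, ξ⟫ ∧ ⟪q, ξ⟫ < 0 := by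
  set e : EuclideanSpace ℝ (Fin N) := EuclideanSpace.single k 1 with he
  have hlt : ⟪p, q⟫ < 1 := inner_lt_one_iff_real_of_norm_eq_one hp hq |>.2 hpq
  have hpp : ⟪p, p⟫ = 1 := by rw [real_inner_self_eq_norm_sq, hp]; norm_num
  have hqq : ⟪q, q⟫ = 1 := by rw [real_inner_self_eq_norm_sq, hq]; norm_num
  have hqp : ⟪q, p⟫ = ⟪p, q⟫ := real_inner_comm _ _
  have c1 : Continuous (fun s : ℝ => ⟪p, (p - q) + s • e⟫) := by fun_prop
  have c2 : Continuous (fun s : ℝ => ⟪q, (p - q) + s • e⟫) := by fun_prop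
  have e1 : ∀ᶠ s in 𝓝 (0:ℝ), 0 < ⟪p, (p - q) + s • e⟫ := by
    refine c1.continuousAt.eventually (lt_mem_nhds ?_)
    simp only [zero_smul, add_zero, inner_sub_right]; linarith
  have e2 : ∀ᶠ s in 𝓝 (0:ℝ), ⟪q, (p - q) + s • e⟫ < 0 := by
    refine c2.continuousAt.eventually (gt_mem_nhds ?_)
    simp only [zero_smul, add_zero, inner_sub_right]; linarith
  have e3 : ∀ᶠ s in 𝓝[≠] (0:ℝ), (p - q) k + s ≠ 0 := by
    by_cases hc : (p - q) k = 0
    · filter_upwards [self_mem_nhdsWithin] with s hs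
      rw [hc, zero_add]; exact hs
    · have c3 : Continuous (fun s : ℝ => (p - q) k + s) := by fun_prop
      refine (c3.continuousAt.eventually_ne ?_).filter_mono nhdsWithin_le_nhds
      simpa using hc
  obtain ⟨s, h1, h2, h3⟩ := ((e1.filter_mono nhdsWithin_le_nhds).and
    ((e2.filter_mono nhdsWithin_le_nhds).and e3)).exists
  set ξ := (p - q) + s • e with hξ
  have hξ0 : ξ ≠ 0 := by
    intro h0; rw [h0] at h1; simp at h1
  have hn : 0 < ‖ξ‖⁻¹ := inv_pos.2 (norm_pos_iff.2 hξ0)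
  refine ⟨‖ξ‖⁻¹ • ξ, ⟨?_, ?_⟩, ?_, ?_⟩
  · rw [norm_smul, norm_inv, norm_norm, inv_mul_cancel₀ (norm_ne_zero_iff.2 hξ0)]
  · have : ξ k = (p - q) k + s := by simp [hξ, he]
    simp only [PiLp.smul_apply, smul_eq_mul, this]
    exact mul_ne_zero hn.ne' h3
  · rw [inner_smul_right]; exact mul_pos hn h1
  · rw [inner_smul_right]; exact mul_neg_of_pos_of_neg hn h2

lemma exists_sep {N : ℕ} (k : Fin N) {ε : ℝ} (hε : 0 < ε) :
    ∃ F : Finset (EuclideanSpace ℝ (Fin N)), (∀ ξ ∈ F, ‖ξ‖ = 1 ∧ ξ k ≠ 0) ∧ SepFam ε F := by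
  classical
  set K : Set (EuclideanSpace ℝ (Fin N) × EuclideanSpace ℝ (Fin N)) :=
    (sphere 0 1 ×ˢ sphere 0 1) ∩ {z | ε ≤ ‖z.1 - z.2‖} with hK
  have hKc : IsCompact K := by
    refine ((isCompact_sphere _ _).prod (isCompact_sphere _ _)).inter_right ?_
    exact isClosed_le continuous_const (by fun_prop)
  have hop : ∀ ξ : {ξ : EuclideanSpace ℝ (Fin N) // ‖ξ‖ = 1 ∧ ξ k ≠ 0}, IsOpen {z : EuclideanSpace ℝ (Fin N) × EuclideanSpace ℝ (Fin N) |
      0 < ⟪z.1, ξ.1⟫ ∧ ⟪z.2, ξ.1⟫ < 0} := by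
    intro ξ
    have k1 : Continuous (fun z : EuclideanSpace ℝ (Fin N) × EuclideanSpace ℝ (Fin N) =>
      ⟪z.1, ξ.1⟫) := by fun_prop
    have k2 : Continuous (fun z : EuclideanSpace ℝ (Fin N) × EuclideanSpace ℝ (Fin N) =>
      ⟪z.2, ξ.1⟫) := by fun_prop
    exact (isOpen_lt continuous_const k1).inter (isOpen_lt k2 continuous_const)
  have hcov : K ⊆ ⋃ ξ : {ξ : EuclideanSpace ℝ (Fin N) // ‖ξ‖ = 1 ∧ ξ k ≠ 0}, {z : EuclideanSpace ℝ (Fin N) × EuclideanSpace ℝ (Fin N) |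
      0 < ⟪z.1, ξ.1⟫ ∧ ⟪z.2, ξ.1⟫ < 0} := by
    rintro ⟨p, q⟩ ⟨⟨hp, hq⟩, hpq⟩
    have hne : p ≠ q := by
      rintro rfl
      simp at hpq
      linarith
    obtain ⟨ξ, h1, h2⟩ := exists_dir k (by simpa using hp) (by simpa using hq) hne
    exact mem_iUnion.2 ⟨⟨ξ, h1⟩, h2⟩
  obtain ⟨t, ht⟩ := hKc.elim_finite_subcover _ hop hcov
  refine ⟨t.image Subtype.val, ?_, ?_⟩
  · intro ξ hξ
    obtain ⟨η, -, rfl⟩ := Finset.mem_image.1 hξ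
    exact η.2
  · intro p q hp hq hpq
    have : (p, q) ∈ K := ⟨⟨by simpa using hp, by simpa using hq⟩, hpq⟩
    have := ht this
    simp only [mem_iUnion] at this
    obtain ⟨η, hη, h⟩ := this
    exact ⟨η.1, Finset.mem_image_of_mem _ hη, h⟩

lemma sep_bound {N : ℕ} {ε : ℝ} (hε : 0 < ε) {F : Finset (EuclideanSpace ℝ (Fin N))}
    (hF : SepFam ε F) {p q : EuclideanSpace ℝ (Fin N)} (hp : ‖p‖ = 1) (hq : ‖q‖ = 1) :
    ‖p - q‖ ≤ ε + 2 * ∑ ξ ∈ F, |ch p ξ - ch q ξ| := by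
  have hs : 0 ≤ ∑ ξ ∈ F, |ch p ξ - ch q ξ| := Finset.sum_nonneg fun _ _ => abs_nonneg _
  rcases lt_or_ge ‖p - q‖ ε with h | h
  · linarith
  · obtain ⟨ξ, hξ, h1, h2⟩ := hF p q hp hq h
    have h3 : |ch p ξ - ch q ξ| = 1 := by
      unfold ch; rw [if_pos h1, if_neg (not_lt.2 h2.le)]; norm_num
    have h4 := Finset.single_le_sum (f := fun ξ => |ch p ξ - ch q ξ|)
      (fun _ _ => abs_nonneg _) hξ
    simp only [h3] at h4
    have := norm_sub_le p q
    linarith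

lemma sep_bound' {N : ℕ} {ε : ℝ} (hε : 0 < ε) {F : Finset (EuclideanSpace ℝ (Fin N))}
    (hF : SepFam ε F) {w q : EuclideanSpace ℝ (Fin N)} (hp : ‖w‖ = 1) (hq : ‖q‖ = 1) :
    ‖q - w‖ ≤ ε + 2 * ∑ ξ ∈ F.filter (fun ξ => 0 < ⟪w, ξ⟫), (1 - ch q ξ) := by
  have hs : 0 ≤ ∑ ξ ∈ F.filter (fun ξ => 0 < ⟪w, ξ⟫), (1 - ch q ξ) :=
    Finset.sum_nonneg fun _ _ => sub_nonneg.2 (ch_le_one _ _)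
  rw [norm_sub_rev]
  rcases lt_or_ge ‖w - q‖ ε with h | h
  · linarith
  · obtain ⟨ξ, hξ, h1, h2⟩ := hF w q hp hq h
    have h3 : 1 - ch q ξ = 1 := by
      unfold ch; rw [if_neg (not_lt.2 h2.le)]; norm_num
    have h4 := Finset.single_le_sum (s := F.filter (fun ξ => 0 < ⟪w, ξ⟫))
      (f := fun ξ => 1 - ch q ξ)
      (fun _ _ => sub_nonneg.2 (ch_le_one _ _)) (Finset.mem_filter.2 ⟨hξ, h1⟩)
    simp only [h3] at h4
    have := norm_sub_le w q
    linarith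

lemma integrable_of_bdd {X F : Type*} [MeasurableSpace X] [NormedAddCommGroup F]
    {μ : Measure X} [IsFiniteMeasure μ] {f : X → F} (hf : AEStronglyMeasurable f μ) {C : ℝ}
    (hC : ∀ᵐ x ∂μ, ‖f x‖ ≤ C) : Integrable f μ :=
  (integrable_const C).mono' hf hC

lemma exists_limit {N : ℕ} {X : Type*} [MeasurableSpace X] {l : Filter ℝ} [l.NeBot]
    {ν : ℝ → Measure X} (hν : ∀ᶠ r in l, IsProbabilityMeasure (ν r))
    {f : X → EuclideanSpace ℝ (Fin N)} (hf : Measurable f)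
    (hf1 : ∀ᶠ r in l, ∀ᵐ y ∂(ν r), ‖f y‖ = 1)
    (hsep : ∀ ε > 0, ∃ F : Finset (EuclideanSpace ℝ (Fin N)), SepFam ε F ∧
      ∀ ξ ∈ F, ∃ c : ℝ, Tendsto (fun r => ∫ y, |ch (f y) ξ - c| ∂(ν r)) l (𝓝 0)) :
    ∃ v : EuclideanSpace ℝ (Fin N), ‖v‖ = 1 ∧
      Tendsto (fun r => ∫ y, ‖f y - v‖ ∂(ν r)) l (𝓝 0) := by
  have hm : ∀ ξ, Measurable (fun y => ch (f y) ξ) := fun ξ => (ch_meas ξ).comp hf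
  have hInteg : ∀ ξ (c : ℝ) (r : ℝ), IsProbabilityMeasure (ν r) →
      Integrable (fun y => |ch (f y) ξ - c|) (ν r) := by
    intro ξ c r hr
    refine integrable_of_bdd (C := 1 + |c|)
      (((hm ξ).sub_const c).abs.aestronglyMeasurable) ?_
    filter_upwards with y
    rw [Real.norm_eq_abs, abs_abs]
    refine (abs_sub _ _).trans ?_
    rw [abs_of_nonneg (ch_nonneg _ _)]
    linarith [ch_le_one (f y) ξ]
  have hint2 : ∀ (v) (r : ℝ), IsProbabilityMeasure (ν r) → (∀ᵐ y ∂(ν r), ‖f y‖ = 1) →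
      Integrable (fun y => ‖f y - v‖) (ν r) := by
    intro v r hr h1
    refine integrable_of_bdd (C := 1 + ‖v‖) (by fun_prop) ?_
    filter_upwards [h1] with y hy
    rw [norm_norm]
    exact (norm_sub_le _ _).trans (by rw [hy])
  -- approximate limits
  have key : ∀ ε > 0, ∃ v : EuclideanSpace ℝ (Fin N), ‖v‖ = 1 ∧
      ∀ᶠ r in l, ∫ y, ‖f y - v‖ ∂(ν r) ≤ 5 * ε := by
    intro ε hε
    obtain ⟨F, hF, hc⟩ := hsep ε hε
    choose! c hc using hc
    have hsum : Tendsto (fun r => ∑ ξ ∈ F, ∫ y, |ch (f y) ξ - c ξ| ∂(ν r)) l (𝓝 0) := by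
      have := tendsto_finsetSum F (fun ξ hξ => hc ξ hξ)
      simpa using this
    have hev := hsum.eventually (gt_mem_nhds hε)
    obtain ⟨r, hr, hrp, hr1⟩ := (hev.and (hν.and hf1)).exists
    have hi : Integrable (fun y => ∑ ξ ∈ F, |ch (f y) ξ - c ξ|) (ν r) :=
      integrable_finsetSum _ fun ξ _ => hInteg ξ (c ξ) r hrp
    obtain ⟨y, hy, hy2⟩ := exists_notMem_null_le_integral hi (ae_iff.1 hr1)
    have hy1 : ‖f y‖ = 1 := by simpa using hy
    rw [integral_finsetSum _ fun ξ _ => hInteg ξ (c ξ) r hrp] at hy2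
    refine ⟨f y, hy1, ?_⟩
    filter_upwards [hev, hν, hf1] with s hs hsp hs1
    have hb : ∀ᵐ x ∂(ν s), ‖f x - f y‖ ≤
        3 * ε + 2 * ∑ ξ ∈ F, |ch (f x) ξ - c ξ| := by
      filter_upwards [hs1] with x hx
      refine (sep_bound hε hF hx hy1).trans ?_
      have : ∑ ξ ∈ F, |ch (f x) ξ - ch (f y) ξ| ≤
          ∑ ξ ∈ F, |ch (f x) ξ - c ξ| + ∑ ξ ∈ F, |ch (f y) ξ - c ξ| := by
        rw [← Finset.sum_add_distrib]
        refine Finset.sum_le_sum fun ξ _ => ?_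
        rw [abs_sub_comm (ch (f y) ξ)]
        exact abs_sub_le _ _ _
      linarith
    have hi' : Integrable (fun y => ∑ ξ ∈ F, |ch (f y) ξ - c ξ|) (ν s) :=
      integrable_finsetSum _ fun ξ _ => hInteg ξ (c ξ) s hsp
    refine (integral_mono_ae (hint2 _ _ hsp hs1)
      ((integrable_const _).add (hi'.const_mul 2)) hb).trans ?_
    simp only [Pi.add_apply]
    rw [integral_add (integrable_const _) (hi'.const_mul 2), integral_const_mul 2,
      integral_finsetSum _ fun ξ _ => hInteg ξ (c ξ) s hsp]
    simp
    linarith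
  choose v hv1 hv using fun n : ℕ => key (1 / ((n:ℝ) + 1)) (by positivity)
  obtain ⟨w, hw, φ, hφ, hlim⟩ := (isCompact_sphere (0 : EuclideanSpace ℝ (Fin N)) 1).tendsto_subseq
    (x := v) (fun n => by simpa using hv1 n)
  refine ⟨w, by simpa using hw, ?_⟩
  rw [Metric.tendsto_nhds]
  intro ε hε
  have h1 : ∀ᶠ n in atTop, dist (v (φ n)) w < ε / 2 :=
    (Metric.tendsto_nhds.1 hlim) _ (half_pos hε)
  have h2 : ∀ᶠ n in atTop, 5 * (1 / ((φ n : ℝ) + 1)) < ε / 2 := by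
    have : Tendsto (fun n => 5 * (1 / ((φ n : ℝ) + 1))) atTop (𝓝 (5 * 0)) :=
      ((tendsto_one_div_add_atTop_nhds_zero_nat (𝕜 := ℝ)).comp hφ.tendsto_atTop).const_mul 5
    rw [mul_zero] at this
    exact this.eventually (gt_mem_nhds (half_pos hε))
  obtain ⟨n, hn1, hn2⟩ := (h1.and h2).exists
  filter_upwards [hv (φ n), hν, hf1] with r hr hp hr1
  have hle : ∫ y, ‖f y - w‖ ∂(ν r) ≤ ∫ y, (‖f y - v (φ n)‖ + dist (v (φ n)) w) ∂(ν r) := by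
    refine integral_mono (hint2 _ _ hp hr1) ((hint2 _ _ hp hr1).add (integrable_const _)) ?_
    intro y
    simp only [dist_eq_norm]
    exact norm_sub_le_norm_sub_add_norm_sub _ _ _
  rw [integral_add (hint2 _ _ hp hr1) (integrable_const _)] at hle
  simp at hle
  rw [Real.dist_eq, sub_zero, abs_of_nonneg (integral_nonneg fun _ => norm_nonneg _)]
  simp only [dist_eq_norm] at hn1 hle
  linarith


lemma setIntegral_closedBall_shift {m : ℕ} (f : (Fin m → ℝ) → ℝ) (y : Fin m → ℝ) (r : ℝ) :
    ∫ z in closedBall y r, f z = ∫ z in closedBall 0 r, f (z + y) := by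
  rw [← integral_indicator measurableSet_closedBall, ← integral_indicator measurableSet_closedBall,
    ← integral_add_right_eq_self _ y]
  congr 1
  ext z
  simp only [Set.indicator, mem_closedBall, dist_eq_norm, add_sub_cancel_right, sub_zero]

lemma osc_tendsto {m : ℕ} {g : ℝ → ℝ} (hg : Measurable g) (hg0 : ∀ t, 0 ≤ g t)
    (hg1 : ∀ t, g t ≤ 1) (ℓ : (Fin m → ℝ) →L[ℝ] ℝ) :
    ∀ᵐ τ : ℝ, Tendsto (fun r : ℝ => ⨍ y in ball (0 : Fin m → ℝ) r, |g (τ + ℓ y) - g τ|)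
      (𝓝[>] 0) (𝓝 0) := by
  set A : ℕ → ℝ → ℝ := fun k τ =>
    ⨍ y in closedBall (0 : Fin m → ℝ) ((1/2)^k), |g (τ + ℓ y) - g τ| with hA
  have habs : ∀ a b, |g a - g b| ≤ 1 := fun a b =>
    abs_le.2 ⟨by linarith [hg0 a, hg1 b], by linarith [hg0 b, hg1 a]⟩
  have hAm : ∀ k, Measurable (A k) := by
    intro k
    simp only [hA, setAverage_eq, smul_eq_mul]
    refine Measurable.const_mul ?_ _
    refine StronglyMeasurable.measurable ?_
    refine StronglyMeasurable.integral_prod_right'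
      (f := fun p : ℝ × (Fin m → ℝ) => |g (p.1 + ℓ p.2) - g p.1|) ?_
    refine Measurable.stronglyMeasurable ?_
    have : Measurable (fun p : ℝ × (Fin m → ℝ) => p.1 + ℓ p.2) := by fun_prop
    exact ((hg.comp this).sub (hg.comp measurable_fst)).abs
  have hs : MeasurableSet {τ | Tendsto (fun k => A k τ) atTop (𝓝 0)} :=
    measurableSet_tendsto (𝓝 0) hAm
  have hae : ∀ᵐ τ : ℝ, τ ∈ {τ | Tendsto (fun k => A k τ) atTop (𝓝 0)} := by
    refine ae_mem_of_ae_add_linearMap_mem ℓ.toLinearMap (volume : Measure (Fin m → ℝ)) volume hs ?_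
    intro t
    have hf : LocallyIntegrable (fun z : Fin m → ℝ => g (t + ℓ z)) volume := by
      refine bdd_locInt (C := 1) (hg.comp (by fun_prop)) ?_
      intro x
      rw [Real.norm_eq_abs, abs_of_nonneg (hg0 _)]
      exact hg1 _
    have := IsUnifLocDoublingMeasure.ae_tendsto_average_norm_sub (volume : Measure (Fin m → ℝ)) hf 1
    filter_upwards [this] with y hy
    have hδ : Tendsto (fun k : ℕ => ((1:ℝ)/2)^k) atTop (𝓝[>] 0) := by
      rw [tendsto_nhdsWithin_iff]
      refine ⟨tendsto_pow_atTop_nhds_zero_of_lt_one (by norm_num) (by norm_num), ?_⟩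
      filter_upwards with k
      simp only [mem_Ioi]; positivity
    have h1 := hy (fun _ => y) (fun k : ℕ => ((1:ℝ)/2)^k) hδ (by
      filter_upwards with k
      simp only [mem_closedBall, dist_self]; positivity)
    refine h1.congr ?_
    intro k
    simp only [hA, setAverage_eq]
    rw [setIntegral_closedBall_shift]
    have hv : volume.real (closedBall y ((1/2:ℝ)^k)) =
        volume.real (closedBall (0 : Fin m → ℝ) ((1/2:ℝ)^k)) := by
      rw [Measure.real, Measure.real, Measure.addHaar_closedBall_center]
    rw [hv]
    congr 2
    ext z
    simp only [Real.norm_eq_abs, map_add, ContinuousLinearMap.coe_coe]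
    congr 3
    ring
  filter_upwards [hae] with τ hτ
  replace hτ : Tendsto (fun k => A k τ) atTop (𝓝 0) := hτ
  rw [Metric.tendsto_nhds]
  intro ε hε
  obtain ⟨K, hK⟩ := eventually_atTop.1 ((Metric.tendsto_nhds.1 hτ) (ε / 2^m) (by positivity))
  have hev : ∀ᶠ r in 𝓝[>] (0:ℝ), r ∈ Ioo 0 (((1:ℝ)/2)^K) := Ioo_mem_nhdsGT (by positivity)
  filter_upwards [hev] with r hr
  have hr1 : r ≤ 1 := hr.2.le.trans (pow_le_one₀ (by norm_num) (by norm_num))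
  obtain ⟨k, hk1, hk2⟩ := exists_nat_pow_near_of_lt_one hr.1 hr1
    (by norm_num : (0:ℝ) < 1/2) (by norm_num)
  have hkK : K ≤ k := by
    by_contra hcon
    push Not at hcon
    have : ((1:ℝ)/2)^K ≤ (1/2)^(k+1) := pow_le_pow_of_le_one (by norm_num) (by norm_num) hcon
    linarith [hr.2]
  have hAk := hK k hkK
  have hnn : ∀ y, 0 ≤ |g (τ + ℓ y) - g τ| := fun y => abs_nonneg _
  have hI0 : 0 ≤ ∫ y in closedBall (0 : Fin m → ℝ) ((1/2)^k), |g (τ + ℓ y) - g τ| :=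
    integral_nonneg hnn
  have hmono : ∫ y in ball (0 : Fin m → ℝ) r, |g (τ + ℓ y) - g τ| ≤
      ∫ y in closedBall (0 : Fin m → ℝ) ((1/2)^k), |g (τ + ℓ y) - g τ| := by
    refine setIntegral_mono_set ?_ (Eventually.of_forall hnn)
      (LE.le.eventuallyLE ((ball_subset_ball hk2).trans ball_subset_closedBall))
    have : IsFiniteMeasure (volume.restrict (closedBall (0 : Fin m → ℝ) ((1/2)^k))) :=
      ⟨by rw [Measure.restrict_apply_univ]; exact measure_closedBall_lt_top⟩
    refine integrable_of_bdd (C := 1) ?_ ?_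
    · have : Measurable (fun p : (Fin m → ℝ) => τ + ℓ p) := by fun_prop
      exact ((hg.comp this).sub_const _).abs.aestronglyMeasurable
    · filter_upwards with y
      rw [Real.norm_eq_abs, abs_abs]; exact habs _ _
  rw [Real.dist_eq, sub_zero] at hAk ⊢
  simp only [hA, setAverage_eq, Measure.real, smul_eq_mul] at hAk ⊢
  have hkp : (0:ℝ) < (1/2)^k := by positivity
  rw [Real.volume_pi_closedBall _ hkp.le] at hAk
  rw [Real.volume_pi_ball _ hr.1]
  simp only [Fintype.card_fin] at hAk ⊢
  rw [ENNReal.toReal_ofReal (by positivity)] at hAk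
  rw [ENNReal.toReal_ofReal (by have := hr.1; positivity)]
  rw [abs_of_nonneg (by positivity)] at hAk
  have hr0 := hr.1
  rw [abs_of_nonneg (mul_nonneg (by positivity) (integral_nonneg hnn))]
  rw [lt_div_iff₀ (by positivity)] at hAk
  refine lt_of_le_of_lt ?_ hAk
  rw [mul_comm _ ((2:ℝ)^m), ← mul_assoc]
  refine mul_le_mul ?_ hmono (integral_nonneg hnn) (by positivity)
  rw [← div_eq_mul_inv, ← div_pow, ← inv_pow]
  refine pow_le_pow_left₀ (by positivity) ?_ _
  rw [inv_eq_one_div, div_le_div_iff₀ (by positivity) (by positivity)]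
  rw [pow_succ] at hk1
  nlinarith

lemma exists_profile {m N : ℕ} {U : (Fin m → ℝ) × ℝ → EuclideanSpace ℝ (Fin N)}
    (hU : Measurable U) (ξ : EuclideanSpace ℝ (Fin N)) (ℓ : (Fin m → ℝ) →L[ℝ] ℝ) {δ0 : ℝ}
    (hδ0 : 0 < δ0)
    (hshift : ∀ z : Fin m → ℝ, ∀ᵐ p : (Fin m → ℝ) × ℝ,
      (∀ s ∈ Icc (0:ℝ) 1, ‖p.1 + s • z‖ < δ0 ∧ |p.2 - s * ℓ z| < 1 + δ0) →
        ch (U (p.1 + z, p.2 - ℓ z)) ξ = ch (U p) ξ) :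
    ∃ δ > 0, ∃ g : ℝ → ℝ, Measurable g ∧ (∀ t, 0 ≤ g t) ∧ (∀ t, g t ≤ 1) ∧
      ∀ᵐ y : Fin m → ℝ, ∀ᵐ t : ℝ, ‖y‖ < δ → |t| < 1 + δ → ch (U (y, t)) ξ = g (t + ℓ y) := by
  set K : ℝ := 1 + ‖ℓ‖ with hK
  have hK1 : 1 ≤ K := by rw [hK]; linarith [norm_nonneg ℓ]
  set δ : ℝ := δ0 / (8 * K) with hδ
  have hδp : 0 < δ := by positivity
  have hδK : δ * K = δ0 / 8 := by rw [hδ]; field_simp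
  have hδδ : δ ≤ δ0 / 8 := by rw [← hδK]; nlinarith
  have hℓ : ∀ z : Fin m → ℝ, ‖z‖ < 2 * δ → |ℓ z| ≤ δ0 / 4 := by
    intro z hz
    have h1 := ℓ.le_opNorm z
    rw [Real.norm_eq_abs] at h1
    have h2 : ‖ℓ‖ * ‖z‖ ≤ K * (2 * δ) :=
      mul_le_mul (by rw [hK]; linarith) hz.le (norm_nonneg _) (by linarith)
    linarith
  have hm : Measurable (fun p => ch (U p) ξ) := (ch_meas ξ).comp hU
  -- the good set
  let Q : (Fin m → ℝ) → (Fin m → ℝ) × ℝ → Prop := fun z p =>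
    ‖z‖ < 2 * δ → ‖p.1‖ < δ → |p.2| < 1 + δ0 / 2 →
      ch (U (p.1 + z, p.2 - ℓ z)) ξ = ch (U p) ξ
  have hQm : MeasurableSet {x : (Fin m → ℝ) × ((Fin m → ℝ) × ℝ) | Q x.1 x.2} := by
    have m1 : Measurable (fun x : (Fin m → ℝ) × ((Fin m → ℝ) × ℝ) =>
      (x.2.1 + x.1, x.2.2 - ℓ x.1)) := by fun_prop
    refine MeasurableSet.imp (measurableSet_lt (by fun_prop) measurable_const) ?_
    refine MeasurableSet.imp (measurableSet_lt (by fun_prop) measurable_const) ?_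
    refine MeasurableSet.imp (measurableSet_lt (by fun_prop) measurable_const) ?_
    exact measurableSet_eq_fun (hm.comp m1) (hm.comp measurable_snd)
  have hQ : ∀ z, ∀ᵐ p, Q z p := by
    intro z
    filter_upwards [hshift z] with p hp hz hp1 hp2
    refine hp fun s hs => ⟨?_, ?_⟩
    · have : ‖s • z‖ ≤ ‖z‖ := by
        rw [norm_smul, Real.norm_eq_abs, abs_of_nonneg hs.1]
        nlinarith [hs.2, norm_nonneg z]
      have := norm_add_le p.1 (s • z)
      linarith
    · have h3 : |s * ℓ z| ≤ |ℓ z| := by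
        rw [abs_mul, abs_of_nonneg hs.1]
        nlinarith [hs.2, abs_nonneg (ℓ z)]
      have := abs_sub p.2 (s * ℓ z)
      have := hℓ z hz
      linarith
  have h1 : ∀ᵐ p, ∀ᵐ z, Q z p := (Measure.ae_ae_comm hQm).1 (Eventually.of_forall hQ)
  rw [Measure.volume_eq_prod] at h1
  have h2 : ∀ᵐ y : Fin m → ℝ, ∀ᵐ s : ℝ, ∀ᵐ z, Q z (y, s) := Measure.ae_ae_of_ae_prod h1
  obtain ⟨y0, hy0, hb⟩ : ∃ y0 : Fin m → ℝ, (∀ᵐ s : ℝ, ∀ᵐ z, Q z (y0, s)) ∧ y0 ∈ ball 0 δ := by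
    have hpos : volume (ball (0 : Fin m → ℝ) δ) ≠ 0 := (measure_ball_pos _ _ hδp).ne'
    have hfr : ∃ᵐ y : Fin m → ℝ, y ∈ ball 0 δ := frequently_ae_mem_iff.2 hpos
    obtain ⟨y0, a, b⟩ := (hfr.and_eventually h2).exists
    exact ⟨y0, b, a⟩
  have hb' : ‖y0‖ < δ := by simpa using hb
  have hQm' : MeasurableSet {x : ℝ × (Fin m → ℝ) | Q x.2 (y0, x.1)} := by
    have : Measurable (fun x : ℝ × (Fin m → ℝ) => (x.2, (y0, x.1))) := by fun_prop
    exact this hQm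
  have h3 : ∀ᵐ z, ∀ᵐ s : ℝ, Q z (y0, s) := (Measure.ae_ae_comm hQm').1 hy0
  refine ⟨δ, hδp, fun τ => ch (U (y0, τ - ℓ y0)) ξ, hm.comp (by fun_prop),
    fun _ => ch_nonneg _ _, fun _ => ch_le_one _ _, ?_⟩
  have h4 : ∀ᵐ y, ∀ᵐ s : ℝ, Q (y - y0) (y0, s) :=
    (measurePreserving_sub_right volume y0).quasiMeasurePreserving.ae h3
  filter_upwards [h4] with y hy
  have h5 : ∀ᵐ t : ℝ, Q (y - y0) (y0, t + ℓ (y - y0)) :=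
    (measurePreserving_add_right volume (ℓ (y - y0))).quasiMeasurePreserving.ae hy
  filter_upwards [h5] with t ht hyδ htδ
  have hz : ‖y - y0‖ < 2 * δ := by
    have := norm_sub_le y y0
    linarith
  have h6 := ht hz hb' (by
    have := abs_add_le t (ℓ (y - y0))
    have := hℓ _ hz
    simp only
    linarith)
  simp only [add_sub_cancel, add_sub_cancel_right] at h6
  rw [h6, map_sub, add_sub_assoc]


/-- Normalised Lebesgue measure on the ball of radius `r`. -/
def avm (m : ℕ) (r : ℝ) : Measure (Fin m → ℝ) :=
  (volume.restrict (ball (0 : Fin m → ℝ) r) univ)⁻¹ • volume.restrict (ball (0 : Fin m → ℝ) r)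

lemma avm_eq {m : ℕ} {F : Type*} [NormedAddCommGroup F] [NormedSpace ℝ F]
    (f : (Fin m → ℝ) → F) (r : ℝ) : ⨍ y in ball (0 : Fin m → ℝ) r, f y = ∫ y, f y ∂(avm m r) := rfl

lemma avm_prob {m : ℕ} {r : ℝ} (hr : 0 < r) : IsProbabilityMeasure (avm m r) := by
  constructor
  unfold avm
  rw [Measure.smul_apply, Measure.restrict_apply_univ, smul_eq_mul]
  exact ENNReal.inv_mul_cancel (measure_ball_pos _ _ hr).ne' measure_ball_lt_top.ne

lemma avm_ae {m : ℕ} {r δ : ℝ} (hr : r ≤ δ) {p : (Fin m → ℝ) → Prop}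
    (hp : ∀ᵐ y : Fin m → ℝ, ‖y‖ < δ → p y) : ∀ᵐ y ∂(avm m r), p y := by
  unfold avm
  refine Measure.ae_smul_measure ?_ _
  rw [ae_restrict_iff' measurableSet_ball]
  filter_upwards [hp] with y hy hyr
  refine hy (lt_of_lt_of_le (by simpa using hyr) hr)

lemma ev_pos_lt {δ : ℝ} (hδ : 0 < δ) : ∀ᶠ r in 𝓝[>] (0:ℝ), 0 < r ∧ r < δ :=
  Ioo_mem_nhdsGT hδ

/-- `χ(U, ξ)` is locally a function `g` of `t + ℓ y`. -/
def Prof {m N : ℕ} (U : (Fin m → ℝ) × ℝ → EuclideanSpace ℝ (Fin N))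
    (ξ : EuclideanSpace ℝ (Fin N)) (ℓ : (Fin m → ℝ) →L[ℝ] ℝ) (g : ℝ → ℝ) (δ : ℝ) : Prop :=
  0 < δ ∧ Measurable g ∧ (∀ t, 0 ≤ g t) ∧ (∀ t, g t ≤ 1) ∧
    ∀ᵐ y : Fin m → ℝ, ∀ᵐ t : ℝ, ‖y‖ < δ → |t| < 1 + δ → ch (U (y, t)) ξ = g (t + ℓ y)

lemma prof_tendsto {m N : ℕ} {U : (Fin m → ℝ) × ℝ → EuclideanSpace ℝ (Fin N)}
    (hU : Measurable U) {ξ : EuclideanSpace ℝ (Fin N)} {ℓ : (Fin m → ℝ) →L[ℝ] ℝ} {g : ℝ → ℝ}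
    {δ : ℝ} (h : Prof U ξ ℓ g δ) :
    ∀ᵐ t : ℝ, |t| < 1 →
      Tendsto (fun r => ∫ y, |ch (U (y, t)) ξ - g t| ∂(avm m r)) (𝓝[>] 0) (𝓝 0) := by
  obtain ⟨hδ, hg, hg0, hg1, hae⟩ := h
  have hm : Measurable (fun p => ch (U p) ξ) := (ch_meas ξ).comp hU
  have hms : MeasurableSet {x : (Fin m → ℝ) × ℝ |
      ‖x.1‖ < δ → |x.2| < 1 + δ → ch (U (x.1, x.2)) ξ = g (x.2 + ℓ x.1)} := by
    refine MeasurableSet.imp (measurableSet_lt (by fun_prop) measurable_const) ?_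
    refine MeasurableSet.imp (measurableSet_lt (measurable_snd.abs) measurable_const) ?_
    have : Measurable (fun x : (Fin m → ℝ) × ℝ => x.2 + ℓ x.1) := by fun_prop
    exact measurableSet_eq_fun hm (hg.comp this)
  have h1 := (Measure.ae_ae_comm hms).1 hae
  filter_upwards [h1, osc_tendsto hg hg0 hg1 ℓ] with t ht hosc ht1
  refine hosc.congr' ?_
  filter_upwards [ev_pos_lt hδ] with r hr
  rw [avm_eq]
  refine integral_congr_ae ?_
  refine avm_ae hr.2.le ?_
  filter_upwards [ht] with y hy hyδ
  rw [hy hyδ (by linarith)]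

lemma core_ae {m N : ℕ} {U : (Fin m → ℝ) × ℝ → EuclideanSpace ℝ (Fin N)}
    (hU : Measurable U) {δ0 : ℝ} (hδ0 : 0 < δ0)
    (hunit : ∀ᵐ p : (Fin m → ℝ) × ℝ, ‖p.1‖ < δ0 → |p.2| < 1 + δ0 → ‖U p‖ = 1)
    {F : ℕ → Finset (EuclideanSpace ℝ (Fin N))} (hF : ∀ n : ℕ, SepFam (1 / ((n:ℝ) + 1)) (F n))
    {ℓ : EuclideanSpace ℝ (Fin N) → (Fin m → ℝ) →L[ℝ] ℝ} {g : EuclideanSpace ℝ (Fin N) → ℝ → ℝ}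
    {δ : EuclideanSpace ℝ (Fin N) → ℝ} (hprof : ∀ n, ∀ ξ ∈ F n, Prof U ξ (ℓ ξ) (g ξ) (δ ξ)) :
    ∀ᵐ t : ℝ, |t| < 1 → (∀ᵐ y : Fin m → ℝ, ‖y‖ < δ0 → ‖U (y, t)‖ = 1) ∧
      (∃ v : EuclideanSpace ℝ (Fin N), ‖v‖ = 1 ∧
        Tendsto (fun r => ∫ y, ‖U (y, t) - v‖ ∂(avm m r)) (𝓝[>] 0) (𝓝 0)) ∧
      ∀ v : EuclideanSpace ℝ (Fin N),
        Tendsto (fun r => ∫ y, ‖U (y, t) - v‖ ∂(avm m r)) (𝓝[>] 0) (𝓝 0) →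
        ∀ (n : ℕ) (w : EuclideanSpace ℝ (Fin N)), ‖w‖ = 1 →
          ‖v - w‖ ≤ 1 / ((n:ℝ) + 1) +
            2 * ∑ ξ ∈ (F n).filter (fun ξ => 0 < ⟪w, ξ⟫), (1 - g ξ t) := by
  have h1 : ∀ᵐ t : ℝ, ∀ n, ∀ ξ ∈ F n, |t| < 1 →
      Tendsto (fun r => ∫ y, |ch (U (y, t)) ξ - g ξ t| ∂(avm m r)) (𝓝[>] 0) (𝓝 0) := by
    rw [ae_all_iff]
    intro n
    rw [Finset.eventually_all]
    intro ξ hξ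
    exact prof_tendsto hU (hprof n ξ hξ)
  have h2 : ∀ᵐ t : ℝ, ∀ᵐ y : Fin m → ℝ, ‖y‖ < δ0 → |t| < 1 + δ0 → ‖U (y, t)‖ = 1 := by
    rw [Measure.volume_eq_prod] at hunit
    have hms : MeasurableSet {x : (Fin m → ℝ) × ℝ |
        ‖x.1‖ < δ0 → |x.2| < 1 + δ0 → ‖U (x.1, x.2)‖ = 1} := by
      refine MeasurableSet.imp (measurableSet_lt (by fun_prop) measurable_const) ?_
      refine MeasurableSet.imp (measurableSet_lt (measurable_snd.abs) measurable_const) ?_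
      exact measurableSet_eq_fun hU.norm measurable_const
    exact (Measure.ae_ae_comm hms).1 (Measure.ae_ae_of_ae_prod hunit)
  filter_upwards [h1, h2] with t ht1 ht2 ht
  have hUt : Measurable (fun y => U (y, t)) := hU.comp (by fun_prop)
  have hu : ∀ᵐ y : Fin m → ℝ, ‖y‖ < δ0 → ‖U (y, t)‖ = 1 := by
    filter_upwards [ht2] with y hy hy'
    exact hy hy' (by linarith)
  have hu' : ∀ᶠ r in 𝓝[>] (0:ℝ), ∀ᵐ y ∂(avm m r), ‖U (y, t)‖ = 1 := by
    filter_upwards [ev_pos_lt hδ0] with r hr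
    exact avm_ae hr.2.le hu
  have hpr : ∀ᶠ r in 𝓝[>] (0:ℝ), IsProbabilityMeasure (avm m r) := by
    filter_upwards [ev_pos_lt hδ0] with r hr
    exact avm_prob hr.1
  refine ⟨hu, ?_, ?_⟩
  · refine exists_limit hpr hUt hu' ?_
    intro ε hε
    obtain ⟨n, hn⟩ := exists_nat_one_div_lt hε
    refine ⟨F n, ?_, fun ξ hξ => ⟨g ξ t, ht1 n ξ hξ ht⟩⟩
    intro p q hp hq hpq
    exact hF n p q hp hq (hn.le.trans hpq)
  · intro v hv n w hw
    set Fw := (F n).filter (fun ξ => 0 < ⟪w, ξ⟫) with hFw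
    have hlim : Tendsto (fun r => ∫ y, ‖U (y, t) - v‖ ∂(avm m r) + (1 / ((n:ℝ) + 1) +
        2 * ∑ ξ ∈ Fw, (∫ y, |ch (U (y, t)) ξ - g ξ t| ∂(avm m r) + (1 - g ξ t)))) (𝓝[>] 0)
        (𝓝 (0 + (1 / ((n:ℝ) + 1) + 2 * ∑ ξ ∈ Fw, (0 + (1 - g ξ t))))) := by
      refine hv.add (Tendsto.const_add _ (Tendsto.const_mul _ (tendsto_finsetSum _ ?_)))
      intro ξ hξ
      exact (ht1 n ξ (Finset.mem_of_mem_filter ξ hξ) ht).add_const _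
    simp only [zero_add] at hlim
    refine ge_of_tendsto hlim ?_
    filter_upwards [hu', hpr] with r hr hp
    have i1 : ∀ v, Integrable (fun y => ‖U (y, t) - v‖) (avm m r) := by
      intro v
      refine integrable_of_bdd (C := 1 + ‖v‖) ((hUt.sub_const v).norm.aestronglyMeasurable) ?_
      filter_upwards [hr] with y hy
      rw [norm_norm]
      exact (norm_sub_le _ _).trans (by rw [hy])
    have i2 : ∀ ξ, Integrable (fun y => |ch (U (y, t)) ξ - g ξ t|) (avm m r) := by
      intro ξ
      have hm : Measurable (fun y => ch (U (y, t)) ξ) := (ch_meas ξ).comp hUt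
      refine integrable_of_bdd (C := 1 + |g ξ t|)
        (((hm).sub_const (g ξ t)).abs.aestronglyMeasurable) ?_
      filter_upwards with y
      rw [Real.norm_eq_abs, abs_abs]
      refine (abs_sub _ _).trans ?_
      rw [abs_of_nonneg (ch_nonneg _ _)]
      linarith [ch_le_one (U (y, t)) ξ]
    have i3 : Integrable (fun y => ∑ ξ ∈ Fw, (|ch (U (y, t)) ξ - g ξ t| + (1 - g ξ t)))
        (avm m r) := integrable_finsetSum _ fun ξ _ => (i2 ξ).add (integrable_const _)
    have hle : ∀ᵐ y ∂(avm m r), ‖v - w‖ ≤ ‖U (y, t) - v‖ + (1 / ((n:ℝ) + 1) +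
        2 * ∑ ξ ∈ Fw, (|ch (U (y, t)) ξ - g ξ t| + (1 - g ξ t))) := by
      filter_upwards [hr] with y hy
      have a1 := sep_bound' (by positivity) (hF n) hw hy
      have a2 : ‖v - w‖ ≤ ‖U (y, t) - v‖ + ‖U (y, t) - w‖ := by
        rw [norm_sub_rev (U (y, t)) v]
        exact norm_sub_le_norm_sub_add_norm_sub _ _ _
      have a3 : ∑ ξ ∈ Fw, (1 - ch (U (y, t)) ξ) ≤
          ∑ ξ ∈ Fw, (|ch (U (y, t)) ξ - g ξ t| + (1 - g ξ t)) := by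
        refine Finset.sum_le_sum fun ξ _ => ?_
        have := neg_abs_le (ch (U (y, t)) ξ - g ξ t)
        linarith
      linarith
    have i5 : ∀ ξ ∈ Fw, Integrable (fun y => |ch (U (y, t)) ξ - g ξ t| + (1 - g ξ t)) (avm m r) :=
      fun ξ _ => (i2 ξ).add (integrable_const _)
    have i4 : Integrable (fun y => 1 / ((n:ℝ) + 1) +
        2 * ∑ ξ ∈ Fw, (|ch (U (y, t)) ξ - g ξ t| + (1 - g ξ t))) (avm m r) :=
      (integrable_const _).add (i3.const_mul 2)
    have hInteg := integral_mono_ae (integrable_const _) ((i1 v).add i4) hle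
    simp only [Pi.add_apply] at hInteg
    rw [integral_add (i1 v) i4,
      integral_add (integrable_const _) (i3.const_mul 2), integral_const_mul 2,
      integral_finsetSum _ i5] at hInteg
    simp only [integral_const, probReal_univ, one_smul] at hInteg
    refine hInteg.trans (le_of_eq ?_)
    congr 3
    refine Finset.sum_congr rfl fun ξ _ => ?_
    rw [integral_add (i2 ξ) (integrable_const _)]
    simp

/-- Precise representative of a bounded measurable function of one variable. -/
lemma exists_precise {N : ℕ} {f : ℝ → EuclideanSpace ℝ (Fin N)} (hf : Measurable f)
    (hb : ∀ t, ‖f t‖ ≤ 1) :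
    ∃ f' : ℝ → EuclideanSpace ℝ (Fin N), Measurable f' ∧ f' =ᵐ[volume] f ∧
      ∀ t w, IsLebesguePoint f t w → IsLebesguePoint f' t w ∧ f' t = w := by
  set A : ℕ → ℝ → EuclideanSpace ℝ (Fin N) := fun k t => ⨍ s in closedBall t ((1/2)^k), f s with hA
  have hAm : ∀ k, StronglyMeasurable (A k) := by
    intro k
    have : A k = fun t => (volume.real (closedBall (0:ℝ) ((1/2)^k)))⁻¹ •
        ∫ s in closedBall (0:ℝ) ((1/2)^k), f (s + t) := by
      ext1 t
      simp only [hA, setAverage_eq]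
      congr 1
      · simp
      · rw [← integral_indicator measurableSet_closedBall,
          ← integral_indicator measurableSet_closedBall, ← integral_add_right_eq_self _ t]
        congr 1
        ext1 z
        simp only [Set.indicator, mem_closedBall, dist_eq_norm, add_sub_cancel_right, sub_zero]
    rw [this]
    have hf2 : StronglyMeasurable (fun p : ℝ × ℝ => f (p.2 + p.1)) :=
      (hf.comp (by fun_prop)).stronglyMeasurable
    have hsm : StronglyMeasurable (fun t => ∫ s in closedBall (0:ℝ) ((1/2)^k), f (s + t)) :=
      StronglyMeasurable.integral_prod_right' hf2
    exact hsm.const_smul (volume.real (closedBall (0:ℝ) ((1/2)^k)))⁻¹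
  have hδ : Tendsto (fun k : ℕ => ((1:ℝ)/2)^k) atTop (𝓝[>] 0) := by
    rw [tendsto_nhdsWithin_iff]
    refine ⟨tendsto_pow_atTop_nhds_zero_of_lt_one (by norm_num) (by norm_num), ?_⟩
    filter_upwards with k
    simp only [mem_Ioi]; positivity
  have hae : (fun t => limUnder atTop (fun k => A k t)) =ᵐ[volume] f := by
    have hl : LocallyIntegrable f volume := by
      refine (locallyIntegrable_const (1:ℝ)).mono hf.aestronglyMeasurable ?_
      filter_upwards with x
      simpa using hb x
    filter_upwards [IsUnifLocDoublingMeasure.ae_tendsto_average volume hl 1] with t ht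
    refine Tendsto.limUnder_eq ?_
    refine ht (fun _ => t) (fun k : ℕ => ((1:ℝ)/2)^k) hδ ?_
    filter_upwards with k
    simp only [mem_closedBall, dist_self]; positivity
  refine ⟨fun t => limUnder atTop (fun k => A k t), ?_, hae, ?_⟩
  · exact (StronglyMeasurable.limUnder hAm).measurable
  · intro t w htw
    refine ⟨?_, ?_⟩
    · refine htw.congr fun r => ?_
      simp only [setAverage_eq]
      congr 1
      refine integral_congr_ae (ae_restrict_of_ae ?_)
      filter_upwards [hae] with s hs
      rw [hs]
    · refine Tendsto.limUnder_eq ?_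
      rw [tendsto_iff_norm_sub_tendsto_zero]
      refine squeeze_zero (fun _ => norm_nonneg _) ?_ (htw.comp hδ)
      intro k
      have hk : (0:ℝ) < (1/2)^k := by positivity
      simp only [hA, Function.comp_apply]
      have hset : ball t ((1/2)^k) =ᵐ[volume] closedBall t ((1/2)^k) := by
        rw [Real.ball_eq_Ioo, Real.closedBall_eq_Icc]
        exact Ioo_ae_eq_Icc
      rw [setAverage_congr hset]
      have hfin : IsFiniteMeasure (volume.restrict (closedBall t ((1/2)^k))) :=
        ⟨by rw [Measure.restrict_apply_univ]; exact measure_closedBall_lt_top⟩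
      have hi : Integrable f (volume.restrict (closedBall t ((1/2)^k))) :=
        integrable_of_bdd hf.aestronglyMeasurable (C := 1) (Eventually.of_forall hb)
      have hne : volume (closedBall t ((1/2)^k)) ≠ 0 := (measure_closedBall_pos _ _ hk).ne'
      have hc : ⨍ s in closedBall t ((1/2)^k), w = w :=
        setAverage_const hne measure_closedBall_lt_top.ne w
      have : ⨍ s in closedBall t ((1/2)^k), f s - w =
          (⨍ s in closedBall t ((1/2)^k), f s) - w := by
        conv_rhs => rw [← hc]
        simp only [setAverage_eq]
        rw [← smul_sub, integral_sub hi (integrable_const _)]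
      rw [← this]
      exact norm_integral_le_integral_norm _


lemma avg_tendsto {m N : ℕ} {V : (Fin m → ℝ) → EuclideanSpace ℝ (Fin N)} (hV : Measurable V)
    {δ0 : ℝ} (hδ0 : 0 < δ0) (hu : ∀ᵐ y : Fin m → ℝ, ‖y‖ < δ0 → ‖V y‖ = 1)
    {v : EuclideanSpace ℝ (Fin N)}
    (hv : Tendsto (fun r => ∫ y, ‖V y - v‖ ∂(avm m r)) (𝓝[>] 0) (𝓝 0)) :
    Tendsto (fun r => ∫ y, V y ∂(avm m r)) (𝓝[>] 0) (𝓝 v) := by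
  rw [tendsto_iff_norm_sub_tendsto_zero]
  refine squeeze_zero' (Eventually.of_forall fun _ => norm_nonneg _) ?_ hv
  filter_upwards [ev_pos_lt hδ0] with r hr
  have := avm_prob (m := m) hr.1
  have hi : Integrable V (avm m r) := by
    refine integrable_of_bdd hV.aestronglyMeasurable (C := 1) ?_
    filter_upwards [avm_ae hr.2.le hu] with y hy
    exact hy.le
  have h1 : ∫ y, V y - v ∂(avm m r) = ∫ y, V y ∂(avm m r) - v := by
    rw [integral_sub hi (integrable_const _)]
    simp
  rw [← h1]
  exact norm_integral_le_integral_norm _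

lemma exists_trace {m N : ℕ} {U : (Fin m → ℝ) × ℝ → EuclideanSpace ℝ (Fin N)}
    (hU : Measurable U) {δ0 : ℝ} (hδ0 : 0 < δ0)
    (h : ∀ᵐ t : ℝ, |t| < 1 → (∀ᵐ y : Fin m → ℝ, ‖y‖ < δ0 → ‖U (y, t)‖ = 1) ∧
      (∃ v : EuclideanSpace ℝ (Fin N), ‖v‖ = 1 ∧
        Tendsto (fun r => ∫ y, ‖U (y, t) - v‖ ∂(avm m r)) (𝓝[>] 0) (𝓝 0))) :
    ∃ f : ℝ → EuclideanSpace ℝ (Fin N), Measurable f ∧ (∀ t, ‖f t‖ ≤ 1) ∧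
      ∀ᵐ t : ℝ, |t| < 1 → (∀ᵐ y : Fin m → ℝ, ‖y‖ < δ0 → ‖U (y, t)‖ = 1) ∧ ‖f t‖ = 1 ∧
        Tendsto (fun r => ∫ y, ‖U (y, t) - f t‖ ∂(avm m r)) (𝓝[>] 0) (𝓝 0) := by
  have hpos : ∀ k : ℕ, (0:ℝ) < 1 / ((k:ℝ) + 1) := fun k => by positivity
  have hA : ∀ k : ℕ, StronglyMeasurable (fun t => ∫ y, U (y, t) ∂(avm m (1 / ((k:ℝ) + 1)))) := by
    intro k
    have := avm_prob (m := m) (hpos k)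
    exact StronglyMeasurable.integral_prod_left' hU.stronglyMeasurable
  set q : ℝ → EuclideanSpace ℝ (Fin N) :=
    fun t => limUnder atTop (fun k : ℕ => ∫ y, U (y, t) ∂(avm m (1 / ((k:ℝ) + 1)))) with hq
  have hqm : Measurable q := (StronglyMeasurable.limUnder hA).measurable
  have hk : Tendsto (fun k : ℕ => 1 / ((k:ℝ) + 1)) atTop (𝓝[>] 0) := by
    rw [tendsto_nhdsWithin_iff]
    exact ⟨tendsto_one_div_add_atTop_nhds_zero_nat, Eventually.of_forall hpos⟩
  classical
  refine ⟨fun t => if ‖q t‖ = 1 then q t else 0, ?_, ?_, ?_⟩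
  · exact Measurable.ite (measurableSet_eq_fun hqm.norm measurable_const) hqm measurable_const
  · intro t
    dsimp only
    split_ifs with h1
    · exact h1.le
    · simp
  · filter_upwards [h] with t ht ht1
    obtain ⟨hu, v, hv, hlim⟩ := ht ht1
    have hUt : Measurable (fun y => U (y, t)) := hU.comp (by fun_prop)
    have hqv : q t = v := ((avg_tendsto hUt hδ0 hu hlim).comp hk).limUnder_eq
    refine ⟨hu, ?_⟩
    rw [hqv, if_pos hv]
    exact ⟨hv, hlim⟩

lemma trace_i {m N : ℕ} {U : (Fin m → ℝ) × ℝ → EuclideanSpace ℝ (Fin N)}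
    (hU : Measurable U) {δ0 : ℝ} (hδ0 : 0 < δ0) {f : ℝ → EuclideanSpace ℝ (Fin N)}
    (hf : Measurable f)
    (H : ∀ᵐ t : ℝ, |t| < 1 → (∀ᵐ y : Fin m → ℝ, ‖y‖ < δ0 → ‖U (y, t)‖ = 1) ∧ ‖f t‖ = 1 ∧
        Tendsto (fun r => ∫ y, ‖U (y, t) - f t‖ ∂(avm m r)) (𝓝[>] 0) (𝓝 0)) :
    Tendsto (fun r => ∫ y, (∫ t in Ioo (-1:ℝ) 1, ‖U (y, t) - f t‖) ∂(avm m r)) (𝓝[>] 0) (𝓝 0) := by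
  have hG : Measurable (fun p : (Fin m → ℝ) × ℝ => ‖U p - f p.2‖) :=
    (hU.sub (hf.comp measurable_snd)).norm
  have hb : ∀ᵐ t : ℝ, ∀ᵐ y : Fin m → ℝ, ‖y‖ < δ0 → |t| < 1 → ‖U (y, t) - f t‖ ≤ 2 := by
    filter_upwards [H] with t ht
    by_cases ht1 : |t| < 1
    · obtain ⟨h1, h2, -⟩ := ht ht1
      filter_upwards [h1] with y hy hy1 _
      refine (norm_sub_le _ _).trans ?_
      rw [hy hy1, h2]; norm_num
    · exact Eventually.of_forall fun y _ h => absurd h ht1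
  have hms : MeasurableSet {x : (Fin m → ℝ) × ℝ |
      ‖x.1‖ < δ0 → |x.2| < 1 → ‖U (x.1, x.2) - f x.2‖ ≤ 2} := by
    refine MeasurableSet.imp (measurableSet_lt (by fun_prop) measurable_const) ?_
    refine MeasurableSet.imp (measurableSet_lt (measurable_snd.abs) measurable_const) ?_
    exact measurableSet_le hG measurable_const
  have hb' := (Measure.ae_ae_comm hms).2 hb
  have hI : ∀ t ∈ Ioo (-1:ℝ) 1, |t| < 1 := fun t ht => abs_lt.2 ht
  have hswap : ∀ᶠ r in 𝓝[>] (0:ℝ), ∫ t in Ioo (-1:ℝ) 1, ∫ y, ‖U (y, t) - f t‖ ∂(avm m r) =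
      ∫ y, (∫ t in Ioo (-1:ℝ) 1, ‖U (y, t) - f t‖) ∂(avm m r) := by
    filter_upwards [ev_pos_lt hδ0] with r hr
    have := avm_prob (m := m) hr.1
    symm
    refine integral_integral_swap (f := fun y t => ‖U (y, t) - f t‖) ?_
    refine integrable_of_bdd (C := 2) hG.aestronglyMeasurable ?_
    have : ∀ᵐ p ∂((avm m r).prod (volume.restrict (Ioo (-1:ℝ) 1))), ‖U p - f p.2‖ ≤ 2 := by
      refine (Measure.ae_prod_iff_ae_ae (measurableSet_le hG measurable_const)).2 ?_
      refine avm_ae hr.2.le ?_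
      filter_upwards [hb'] with y hy hyδ
      rw [ae_restrict_iff' measurableSet_Ioo]
      filter_upwards [hy] with t ht ht1
      exact ht hyδ (hI t ht1)
    filter_upwards [this] with p hp
    simpa [Function.uncurry] using hp
  refine Tendsto.congr' hswap ?_
  have h0 : ∫ t in Ioo (-1:ℝ) 1, (0:ℝ) = 0 := by simp
  suffices hs : Tendsto (fun r => ∫ t in Ioo (-1:ℝ) 1, ∫ y, ‖U (y, t) - f t‖ ∂(avm m r))
      (𝓝[>] 0) (𝓝 (∫ t in Ioo (-1:ℝ) 1, (0:ℝ))) by rwa [h0] at hs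
  refine tendsto_integral_filter_of_dominated_convergence (fun _ => 2) ?_ ?_ ?_ ?_
  · filter_upwards [ev_pos_lt hδ0] with r hr
    have := avm_prob (m := m) hr.1
    exact (StronglyMeasurable.integral_prod_left' hG.stronglyMeasurable).aestronglyMeasurable
  · filter_upwards [ev_pos_lt hδ0] with r hr
    have := avm_prob (m := m) hr.1
    rw [ae_restrict_iff' measurableSet_Ioo]
    filter_upwards [hb] with t ht ht1
    have := norm_integral_le_of_norm_le_const (μ := avm m r) (C := 2)
      (f := fun y => ‖U (y, t) - f t‖) ?_
    · simpa using this
    · refine avm_ae hr.2.le ?_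
      filter_upwards [ht] with y hy hyδ
      rw [norm_norm]
      exact hy hyδ (hI t ht1)
  · exact integrable_const _
  · rw [ae_restrict_iff' measurableSet_Ioo]
    filter_upwards [H] with t ht ht1
    exact (ht (hI t ht1)).2.2

lemma ch_ge {N : ℕ} {w q ξ : EuclideanSpace ℝ (Fin N)} (hξ : ‖ξ‖ = 1) (hκ : 0 < ⟪w, ξ⟫) :
    1 - ch q ξ ≤ (⟪w, ξ⟫)⁻¹ * ‖q - w‖ := by
  unfold ch
  split_ifs with h
  · rw [sub_self]; positivity
  · rw [sub_zero, inv_mul_eq_div, le_div_iff₀ hκ, one_mul]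
    have h1 : ⟪w - q, ξ⟫ ≤ ‖w - q‖ * ‖ξ‖ := real_inner_le_norm _ _
    rw [hξ, mul_one, inner_sub_left, norm_sub_rev] at h1
    linarith [not_lt.1 h]

lemma profile_leb {m N : ℕ} {U : (Fin m → ℝ) × ℝ → EuclideanSpace ℝ (Fin N)}
    (hU : Measurable U) {ξ : EuclideanSpace ℝ (Fin N)} {ℓ : (Fin m → ℝ) →L[ℝ] ℝ} {g : ℝ → ℝ}
    {δ : ℝ} (h : Prof U ξ ℓ g δ) (hξ : ‖ξ‖ = 1) {δ0 : ℝ} (hδ0 : 0 < δ0)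
    (hunit : ∀ᵐ p : (Fin m → ℝ) × ℝ, ‖p.1‖ < δ0 → |p.2| < 1 + δ0 → ‖U p‖ = 1)
    {w : EuclideanSpace ℝ (Fin N)} (hκ : 0 < ⟪w, ξ⟫) {t0 : ℝ} (ht0 : |t0| < 1)
    (hLeb : Tendsto (fun r => (∫ p in ball (0 : Fin m → ℝ) r ×ˢ ball t0 r, ‖U p - w‖) / r ^ (m + 1))
      (𝓝[>] 0) (𝓝 0)) :
    Tendsto (fun r => (∫ s in ball t0 r, (1 - g s)) / r) (𝓝[>] 0) (𝓝 0) := by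
  obtain ⟨hδ, hg, hg0, hg1, hae⟩ := h
  set K : ℝ := 1 + ‖ℓ‖ with hK
  have hK1 : 1 ≤ K := by have := norm_nonneg ℓ; linarith
  have hK0 : 0 < K := by linarith
  have h2 : Tendsto (fun r : ℝ => 2 * r) (𝓝[>] 0) (𝓝[>] 0) := by
    rw [tendsto_nhdsWithin_iff]
    refine ⟨?_, ?_⟩
    · have : Tendsto (fun r : ℝ => 2 * r) (𝓝 0) (𝓝 (2 * 0)) := tendsto_id.const_mul 2
      rw [mul_zero] at this
      exact this.mono_left nhdsWithin_le_nhds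
    · filter_upwards [self_mem_nhdsWithin] with r hr
      have : 0 < r := hr
      simp only [mem_Ioi]; linarith
  have hlim := (hLeb.comp h2).const_mul ((⟪w, ξ⟫)⁻¹ * (2 * K ^ m))
  rw [mul_zero] at hlim
  refine squeeze_zero' ?_ ?_ hlim
  · filter_upwards [ev_pos_lt hδ] with r hr
    refine div_nonneg (integral_nonneg fun s => ?_) hr.1.le
    have := hg1 s
    simp only [Pi.zero_apply]; linarith
  have hd : 0 < min δ δ0 / 2 := by positivity
  filter_upwards [ev_pos_lt hd] with r hr
  obtain ⟨hr0, hr1⟩ := hr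
  have hrδ : 2 * r < δ := by have := min_le_left δ δ0; linarith
  have hrδ0 : 2 * r < δ0 := by have := min_le_right δ δ0; linarith
  have hρ0 : 0 < r / K := by positivity
  have hρ1 : r / K ≤ r := div_le_self hr0.le hK1
  have hInteg : IntegrableOn (fun p => ‖U p - w‖) (ball (0 : Fin m → ℝ) (2 * r) ×ˢ ball t0 (2 * r)) := by
    have hfin : IsFiniteMeasure (volume.restrict
        (ball (0 : Fin m → ℝ) (2 * r) ×ˢ ball t0 (2 * r))) := by
      refine ⟨?_⟩
      rw [Measure.restrict_apply_univ, Measure.volume_eq_prod, Measure.prod_prod]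
      exact ENNReal.mul_lt_top measure_ball_lt_top measure_ball_lt_top
    refine integrable_of_bdd (hU.sub_const w).norm.aestronglyMeasurable (C := 1 + ‖w‖) ?_
    rw [ae_restrict_iff' (measurableSet_ball.prod measurableSet_ball)]
    filter_upwards [hunit] with p hp hmem
    rw [norm_norm]
    refine (norm_sub_le _ _).trans ?_
    rw [hp]
    · have := hmem.1
      rw [mem_ball_zero_iff] at this
      linarith
    · have := hmem.2
      rw [mem_ball, Real.dist_eq] at this
      have h3 := abs_sub_abs_le_abs_sub p.2 t0
      linarith
  have hsub : ball (0 : Fin m → ℝ) (r / K) ×ˢ ball t0 (2 * r) ⊆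
      ball (0 : Fin m → ℝ) (2 * r) ×ˢ ball t0 (2 * r) :=
    prod_mono (ball_subset_ball (by linarith)) Subset.rfl
  set μ1 := (volume : Measure (Fin m → ℝ)).restrict (ball 0 (r / K)) with hμ1
  set μ2 := (volume : Measure ℝ).restrict (ball t0 (2 * r)) with hμ2
  have hprod : volume.restrict (ball (0 : Fin m → ℝ) (r / K) ×ˢ ball t0 (2 * r)) = μ1.prod μ2 := by
    rw [hμ1, hμ2, Measure.prod_restrict, Measure.volume_eq_prod]
  have hint1 : Integrable (fun p => ‖U p - w‖) (μ1.prod μ2) := by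
    rw [← hprod]; exact hInteg.mono_set hsub
  have hfin1 : IsFiniteMeasure μ1 :=
    ⟨by rw [Measure.restrict_apply_univ]; exact measure_ball_lt_top⟩
  have key : ∀ᵐ y ∂μ1, ∫ s in ball t0 r, (1 - g s) ≤ (⟪w, ξ⟫)⁻¹ * ∫ t, ‖U (y, t) - w‖ ∂μ2 := by
    filter_upwards [hint1.prod_right_ae, ae_restrict_of_ae hae, ae_restrict_mem measurableSet_ball]
      with y hy1 hy2 hy3
    rw [mem_ball_zero_iff] at hy3
    have hℓ : |ℓ y| ≤ r := by
      have h3 := ℓ.le_opNorm y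
      rw [Real.norm_eq_abs] at h3
      have h4 : ‖ℓ‖ * ‖y‖ ≤ K * (r / K) :=
        mul_le_mul (by linarith) hy3.le (norm_nonneg _) hK0.le
      rw [mul_div_cancel₀ _ hK0.ne'] at h4
      linarith
    rw [← integral_const_mul, ← integral_indicator measurableSet_ball, hμ2,
      ← integral_indicator measurableSet_ball, ← integral_add_right_eq_self _ (ℓ y)]
    refine integral_mono_of_nonneg ?_ ?_ ?_
    · refine Eventually.of_forall fun t => ?_
      refine indicator_nonneg (fun s _ => ?_) _
      have := hg1 s
      linarith
    · rw [integrable_indicator_iff measurableSet_ball]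
      exact hy1.const_mul _
    · filter_upwards [hy2] with t ht
      by_cases hm : t + ℓ y ∈ ball t0 r
      · have hm2 : |t - t0| < 2 * r := by
          rw [mem_ball, Real.dist_eq] at hm
          have h3 : t - t0 = (t + ℓ y - t0) - ℓ y := by ring
          rw [h3]
          have := abs_sub (t + ℓ y - t0) (ℓ y)
          linarith
        have hm3 : t ∈ ball t0 (2 * r) := by rwa [mem_ball, Real.dist_eq]
        rw [indicator_of_mem hm, indicator_of_mem hm3, ← ht (by linarith) ?_]
        · exact ch_ge hξ hκ
        · have := abs_sub_abs_le_abs_sub t t0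
          linarith
      · rw [indicator_of_notMem hm]
        refine indicator_nonneg (fun s _ => ?_) _
        positivity
  have h5 := integral_mono_ae (integrable_const _) (hint1.integral_prod_left.const_mul _) key
  rw [integral_const, integral_const_mul, ← integral_prod _ hint1, ← hprod] at h5
  have h6 : ∫ p in ball (0 : Fin m → ℝ) (r / K) ×ˢ ball t0 (2 * r), ‖U p - w‖ ≤
      ∫ p in ball (0 : Fin m → ℝ) (2 * r) ×ˢ ball t0 (2 * r), ‖U p - w‖ :=
    setIntegral_mono_set hInteg (Eventually.of_forall fun _ => norm_nonneg _) hsub.eventuallyLE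
  have h7 : μ1.real univ = (2 * (r / K)) ^ m := by
    rw [Measure.real, hμ1, Measure.restrict_apply_univ, Real.volume_pi_ball _ hρ0,
      ENNReal.toReal_ofReal (by positivity), Fintype.card_fin]
  rw [h7, smul_eq_mul] at h5
  simp only [Function.comp_apply]
  set J := ∫ s in ball t0 r, (1 - g s)
  set I1 := ∫ p in ball (0 : Fin m → ℝ) (2 * r) ×ˢ ball t0 (2 * r), ‖U p - w‖
  have h8 : (2 * (r / K)) ^ m * J ≤ (⟪w, ξ⟫)⁻¹ * I1 :=
    h5.trans (mul_le_mul_of_nonneg_left h6 (by positivity))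
  have h9 : (2 * (r / K)) ^ m = (2 * r) ^ m / K ^ m := by
    rw [← mul_div_assoc, div_pow]
  rw [h9, div_mul_eq_mul_div, div_le_iff₀ (by positivity)] at h8
  have h10 : J ≤ (⟪w, ξ⟫)⁻¹ * I1 * K ^ m / (2 * r) ^ m := by
    rw [le_div_iff₀ (by positivity)]; linarith
  calc J / r ≤ (⟪w, ξ⟫)⁻¹ * I1 * K ^ m / (2 * r) ^ m / r := by gcongr
    _ = (⟪w, ξ⟫)⁻¹ * (2 * K ^ m) * (I1 / (2 * r) ^ (m + 1)) := by
      field_simp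
      ring

lemma trace_iii {m N : ℕ} {U : (Fin m → ℝ) × ℝ → EuclideanSpace ℝ (Fin N)}
    (hU : Measurable U) {δ0 : ℝ} (hδ0 : 0 < δ0)
    (hunit : ∀ᵐ p : (Fin m → ℝ) × ℝ, ‖p.1‖ < δ0 → |p.2| < 1 + δ0 → ‖U p‖ = 1)
    {F : ℕ → Finset (EuclideanSpace ℝ (Fin N))} (hF1 : ∀ n, ∀ ξ ∈ F n, ‖ξ‖ = 1)
    {ℓ : EuclideanSpace ℝ (Fin N) → (Fin m → ℝ) →L[ℝ] ℝ} {g : EuclideanSpace ℝ (Fin N) → ℝ → ℝ}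
    {δ : EuclideanSpace ℝ (Fin N) → ℝ} (hprof : ∀ n, ∀ ξ ∈ F n, Prof U ξ (ℓ ξ) (g ξ) (δ ξ))
    {f : ℝ → EuclideanSpace ℝ (Fin N)} (hf : Measurable f) (hf1 : ∀ t, ‖f t‖ ≤ 1)
    {w : EuclideanSpace ℝ (Fin N)}
    (hfw : ∀ᵐ t : ℝ, |t| < 1 → ∀ n : ℕ, ‖f t - w‖ ≤ 1 / ((n:ℝ) + 1) +
            2 * ∑ ξ ∈ (F n).filter (fun ξ => 0 < ⟪w, ξ⟫), (1 - g ξ t))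
    {t0 : ℝ} (ht0 : |t0| < 1)
    (hLeb : Tendsto (fun r => (∫ p in ball (0 : Fin m → ℝ) r ×ˢ ball t0 r, ‖U p - w‖) / r ^ (m + 1))
      (𝓝[>] 0) (𝓝 0)) :
    IsLebesguePoint f t0 w := by
  unfold IsLebesguePoint
  have hub : ∀ n : ℕ, ∀ᶠ r in 𝓝[>] (0:ℝ), ⨍ s in ball t0 r, ‖f s - w‖ ≤ 1 / ((n:ℝ) + 1) +
      ∑ ξ ∈ (F n).filter (fun ξ => 0 < ⟪w, ξ⟫), (∫ s in ball t0 r, (1 - g ξ s)) / r := by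
    intro n
    have hd : 0 < 1 - |t0| := by linarith
    filter_upwards [ev_pos_lt hd] with r hr
    have hfin : IsFiniteMeasure (volume.restrict (ball t0 r)) :=
      ⟨by rw [Measure.restrict_apply_univ]; exact measure_ball_lt_top⟩
    have hvol : volume.real (ball t0 r) = 2 * r := Real.volume_real_ball hr.1.le
    have hgi : ∀ ξ ∈ (F n).filter (fun ξ => 0 < ⟪w, ξ⟫),
        Integrable (fun s => 1 - g ξ s) (volume.restrict (ball t0 r)) := by
      intro ξ hξ
      obtain ⟨-, hg, hg0, hg1, -⟩ := hprof n ξ (Finset.mem_of_mem_filter ξ hξ)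
      refine integrable_of_bdd (measurable_const.sub hg).aestronglyMeasurable (C := 1) ?_
      refine Eventually.of_forall fun s => ?_
      rw [Real.norm_eq_abs, abs_of_nonneg (by linarith [hg1 s])]
      linarith [hg0 s]
    have hs : Integrable (fun s => ∑ ξ ∈ (F n).filter (fun ξ => 0 < ⟪w, ξ⟫), (1 - g ξ s))
        (volume.restrict (ball t0 r)) := integrable_finsetSum _ hgi
    have hi : Integrable (fun s => ‖f s - w‖) (volume.restrict (ball t0 r)) := by
      refine integrable_of_bdd (hf.sub_const w).norm.aestronglyMeasurable (C := 1 + ‖w‖) ?_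
      refine Eventually.of_forall fun s => ?_
      rw [norm_norm]
      exact (norm_sub_le _ _).trans (by linarith [hf1 s])
    have hle := integral_mono_ae hi ((integrable_const (1 / ((n:ℝ) + 1))).add (hs.const_mul 2)) (by
      change ∀ᵐ s ∂(volume.restrict (ball t0 r)), _
      rw [ae_restrict_iff' measurableSet_ball]
      filter_upwards [hfw] with s hs hsr
      refine hs ?_ n
      rw [mem_ball, Real.dist_eq] at hsr
      linarith [abs_sub_abs_le_abs_sub s t0, hr.2])
    simp only [Pi.add_apply] at hle
    rw [integral_add (integrable_const _) (hs.const_mul 2), integral_const, integral_const_mul,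
      integral_finsetSum _ hgi, measureReal_restrict_apply_univ, hvol, smul_eq_mul] at hle
    rw [setAverage_eq, hvol, smul_eq_mul, inv_mul_eq_div, div_le_iff₀ (by linarith [hr.1]),
      ← Finset.sum_div]
    refine hle.trans (le_of_eq ?_)
    have := hr.1.ne'
    field_simp
  have hnn : ∀ r : ℝ, 0 ≤ ⨍ s in ball t0 r, ‖f s - w‖ := by
    intro r
    rw [setAverage_eq]
    exact smul_nonneg (by positivity) (integral_nonneg fun _ => norm_nonneg _)
  rw [Metric.tendsto_nhds]
  intro ε hε
  obtain ⟨n, hn⟩ := exists_nat_one_div_lt hε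
  have hlim : Tendsto (fun r => 1 / ((n:ℝ) + 1) +
      ∑ ξ ∈ (F n).filter (fun ξ => 0 < ⟪w, ξ⟫), (∫ s in ball t0 r, (1 - g ξ s)) / r) (𝓝[>] 0)
      (𝓝 (1 / ((n:ℝ) + 1) + ∑ ξ ∈ (F n).filter (fun ξ => 0 < ⟪w, ξ⟫), 0)) := by
    refine Tendsto.const_add _ (tendsto_finsetSum _ fun ξ hξ => ?_)
    have hξ' := Finset.mem_filter.1 hξ
    exact profile_leb hU (hprof n ξ hξ'.1) (hF1 n ξ hξ'.1) hδ0 hunit hξ'.2 ht0 hLeb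
  rw [Finset.sum_const_zero, add_zero] at hlim
  filter_upwards [hub n, hlim.eventually_lt_const hn] with r h1 h2
  rw [Real.dist_eq, sub_zero, abs_of_nonneg (hnn r)]
  linarith

lemma product_main {m N : ℕ} {U : (Fin m → ℝ) × ℝ → EuclideanSpace ℝ (Fin N)}
    (hU : Measurable U) {δ0 : ℝ} (hδ0 : 0 < δ0)
    (hunit : ∀ᵐ p : (Fin m → ℝ) × ℝ, ‖p.1‖ < δ0 → |p.2| < 1 + δ0 → ‖U p‖ = 1)
    {F : ℕ → Finset (EuclideanSpace ℝ (Fin N))} (hF : ∀ n : ℕ, SepFam (1 / ((n:ℝ) + 1)) (F n))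
    (hF1 : ∀ n, ∀ ξ ∈ F n, ‖ξ‖ = 1)
    {ℓ : EuclideanSpace ℝ (Fin N) → (Fin m → ℝ) →L[ℝ] ℝ} {g : EuclideanSpace ℝ (Fin N) → ℝ → ℝ}
    {δ : EuclideanSpace ℝ (Fin N) → ℝ} (hprof : ∀ n, ∀ ξ ∈ F n, Prof U ξ (ℓ ξ) (g ξ) (δ ξ)) :
    ∃ f : ℝ → EuclideanSpace ℝ (Fin N), Measurable f ∧
      Tendsto (fun r => ∫ y, (∫ t in Ioo (-1:ℝ) 1, ‖U (y, t) - f t‖) ∂(avm m r)) (𝓝[>] 0) (𝓝 0) ∧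
      (∀ᵐ t : ℝ, |t| < 1 → ‖f t‖ = 1 ∧
        Tendsto (fun r => ∫ y, U (y, t) ∂(avm m r)) (𝓝[>] 0) (𝓝 (f t))) ∧
      ∀ t0 : ℝ, |t0| < 1 → ∀ w : EuclideanSpace ℝ (Fin N), ‖w‖ = 1 →
        Tendsto (fun r => (∫ p in ball (0 : Fin m → ℝ) r ×ˢ ball t0 r, ‖U p - w‖) / r ^ (m + 1))
          (𝓝[>] 0) (𝓝 0) → IsLebesguePoint f t0 w ∧ f t0 = w := by
  have hcore := core_ae hU hδ0 hunit hF hprof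
  obtain ⟨f0, hf0, hf1, hf2⟩ := exists_trace hU hδ0 (by
    filter_upwards [hcore] with t ht ht1
    exact ⟨(ht ht1).1, (ht ht1).2.1⟩)
  obtain ⟨f, hf, hff, hfl⟩ := exists_precise hf0 hf1
  have H : ∀ᵐ t : ℝ, |t| < 1 → (∀ᵐ y : Fin m → ℝ, ‖y‖ < δ0 → ‖U (y, t)‖ = 1) ∧ ‖f t‖ = 1 ∧
        Tendsto (fun r => ∫ y, ‖U (y, t) - f t‖ ∂(avm m r)) (𝓝[>] 0) (𝓝 0) := by
    filter_upwards [hf2, hff] with t ht hft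
    rwa [hft]
  refine ⟨f, hf, trace_i hU hδ0 hf H, ?_, ?_⟩
  · filter_upwards [H] with t ht ht1
    obtain ⟨h1, h2, h3⟩ := ht ht1
    exact ⟨h2, avg_tendsto (hU.comp (by fun_prop)) hδ0 h1 h3⟩
  · intro t0 ht0 w hw hLeb
    refine hfl t0 w (trace_iii hU hδ0 hunit hF1 hprof hf0 hf1 ?_ ht0 hLeb)
    filter_upwards [hcore, hf2] with t ht hft ht1 n
    exact (ht ht1).2.2 _ (hft ht1).2.2 n w hw

lemma ins_apply_castSucc (n : ℕ) (y : Fin n → ℝ) (t : ℝ) (i : Fin n) :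
    ins (n + 1) y t i.castSucc = y i := by
  have : ((i.castSucc : Fin (n+1)) : ℕ) < n + 1 - 1 := by simp
  change (if h : ((i.castSucc : Fin (n+1)) : ℕ) < n + 1 - 1 then _ else t) = y i
  rw [dif_pos this]
  rfl

lemma ins_apply_last (n : ℕ) (y : Fin n → ℝ) (t : ℝ) :
    ins (n + 1) y t (Fin.last n) = t := by
  have : ¬ ((Fin.last n : Fin (n+1)) : ℕ) < n + 1 - 1 := by simp
  change (if h : ((Fin.last n : Fin (n+1)) : ℕ) < n + 1 - 1 then _ else t) = t
  rw [dif_neg this]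

/-- `ins` as a linear map on the product. -/
def insL (n : ℕ) : ((Fin n → ℝ) × ℝ) →ₗ[ℝ] EuclideanSpace ℝ (Fin (n + 1)) where
  toFun p := ins (n + 1) p.1 p.2
  map_add' p q := by
    ext j
    refine Fin.lastCases ?_ (fun i => ?_) j
    · simp only [PiLp.add_apply, ins_apply_last, Prod.snd_add]
    · simp only [PiLp.add_apply, ins_apply_castSucc, Prod.fst_add, Pi.add_apply]
  map_smul' c p := by
    ext j
    refine Fin.lastCases ?_ (fun i => ?_) j
    · simp only [PiLp.smul_apply, ins_apply_last, Prod.smul_snd, RingHom.id_apply]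
    · simp only [PiLp.smul_apply, ins_apply_castSucc, Prod.smul_fst, Pi.smul_apply, RingHom.id_apply]

lemma insL_apply (n : ℕ) (p : (Fin n → ℝ) × ℝ) : insL n p = ins (n + 1) p.1 p.2 := rfl

lemma insL_cont (n : ℕ) : Continuous (insL n) := (insL n).continuous_of_finiteDimensional

lemma insL_mp (n : ℕ) : MeasurePreserving (insL n) volume volume := by
  have h1 := (volume_preserving_piFinSuccAbove (fun _ : Fin (n+1) => ℝ) (Fin.last n)).symm
  have h2 : MeasurePreserving (Prod.swap : (Fin n → ℝ) × ℝ → ℝ × (Fin n → ℝ)) volume volume :=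
    Measure.measurePreserving_swap
  have h3 := PiLp.volume_preserving_toLp (Fin (n + 1))
  have h4 := h3.comp (h1.comp h2)
  have heq : ⇑(insL n) = WithLp.toLp 2 ∘
      (⇑(MeasurableEquiv.piFinSuccAbove (fun _ : Fin (n+1) => ℝ) (Fin.last n)).symm ∘ Prod.swap) := by
    ext1 p
    ext j
    refine Fin.lastCases ?_ (fun i => ?_) j
    · simp [insL_apply, ins_apply_last, MeasurableEquiv.piFinSuccAbove]
    · simp [insL_apply, ins_apply_castSucc, MeasurableEquiv.piFinSuccAbove]
  rw [heq]
  exact h4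

lemma cube_eq (n : ℕ) {r : ℝ} (hr : 0 < r) : cube (n + 1) r = ball (0 : Fin n → ℝ) r := by
  rw [ball_pi _ hr]
  change Set.univ.pi (fun _ : Fin n => Ioo (-r) r) = _
  congr 1
  ext1 i
  rw [Real.ball_eq_Ioo]
  simp

lemma exists_delta {n : ℕ} {Ω : Set (EuclideanSpace ℝ (Fin (n + 1)))} (hΩ : IsOpen Ω)
    (hL : (fun t => ins (n + 1) 0 t) '' Icc (-1 : ℝ) 1 ⊆ Ω) :
    ∃ δ0 : ℝ, 0 < δ0 ∧ ∀ p : (Fin n → ℝ) × ℝ, ‖p.1‖ < δ0 → |p.2| < 1 + δ0 → insL n p ∈ Ω := by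
  have hW : IsOpen (insL n ⁻¹' Ω) := hΩ.preimage (insL_cont n)
  have hK : IsCompact (({0} : Set (Fin n → ℝ)) ×ˢ Icc (-1:ℝ) 1) :=
    isCompact_singleton.prod isCompact_Icc
  have hKW : ({0} : Set (Fin n → ℝ)) ×ˢ Icc (-1:ℝ) 1 ⊆ insL n ⁻¹' Ω := by
    rintro ⟨y, t⟩ ⟨hy, ht⟩
    have hy' : y = 0 := hy
    subst hy'
    exact hL ⟨t, ht, rfl⟩
  obtain ⟨δ, hδ, hsub⟩ := hK.exists_thickening_subset_open hW hKW
  refine ⟨δ, hδ, fun p hp1 hp2 => ?_⟩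
  refine hsub (mem_thickening_iff.2 ⟨(0, max (-1) (min 1 p.2)), ⟨rfl, ?_, ?_⟩, ?_⟩)
  · exact le_max_left _ _
  · exact max_le (by norm_num) (min_le_left _ _)
  · rw [Prod.dist_eq, max_lt_iff]
    refine ⟨by simpa using hp1, ?_⟩
    rw [Real.dist_eq, abs_lt]
    rw [abs_lt] at hp2
    dsimp only
    rcases le_total 1 p.2 with h | h
    · rw [min_eq_left h, max_eq_right (by norm_num)]
      constructor <;> linarith
    · rw [min_eq_right h]
      rcases le_total (-1) p.2 with h' | h'
      · rw [max_eq_right h']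
        constructor <;> linarith
      · rw [max_eq_left h']
        constructor <;> linarith

/-- The slope functional attached to `ξ`. -/
def ell {n : ℕ} (ξ : EuclideanSpace ℝ (Fin (n + 1))) : (Fin n → ℝ) →L[ℝ] ℝ :=
  ∑ i : Fin n, (ξ i.castSucc / ξ (Fin.last n)) • ContinuousLinearMap.proj i

lemma ell_inner {n : ℕ} {ξ : EuclideanSpace ℝ (Fin (n + 1))} (hξ : ξ (Fin.last n) ≠ 0)
    (z : Fin n → ℝ) : ⟪insL n (z, -(ell ξ z)), ξ⟫ = 0 := by
  rw [PiLp.inner_apply, Fin.sum_univ_castSucc]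
  simp only [insL_apply, ins_apply_castSucc, ins_apply_last]
  have h : ell ξ z = (∑ i : Fin n, ξ i.castSucc * z i) / ξ (Fin.last n) := by
    simp only [ell, ContinuousLinearMap.sum_apply, ContinuousLinearMap.smul_apply,
      ContinuousLinearMap.proj_apply, smul_eq_mul]
    rw [Finset.sum_div]
    exact Finset.sum_congr rfl fun i _ => by ring
  rw [h]
  simp only [RCLike.inner_apply, conj_trivial]
  field_simp
  ring

lemma insL_line {n : ℕ} (p : (Fin n → ℝ) × ℝ) (z : Fin n → ℝ) (a s : ℝ) :
    insL n p + s • insL n (z, -a) = insL n (p.1 + s • z, p.2 - s * a) := by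
  rw [← map_smul, ← map_add]
  congr 1
  ext1
  · simp
  · simp [sub_eq_add_neg]

lemma exists_prof {n : ℕ} {Ω : Set (EuclideanSpace ℝ (Fin (n + 1)))} (hΩ : IsOpen Ω)
    {u : EuclideanSpace ℝ (Fin (n + 1)) → EuclideanSpace ℝ (Fin (n + 1))} (hmeas : Measurable u)
    (hkin : KineticFormulation Ω u) {δ0 : ℝ} (hδ0 : 0 < δ0)
    (hδ : ∀ p : (Fin n → ℝ) × ℝ, ‖p.1‖ < δ0 → |p.2| < 1 + δ0 → insL n p ∈ Ω)
    {ξ : EuclideanSpace ℝ (Fin (n + 1))} (hξ1 : ‖ξ‖ = 1) (hξ : ξ (Fin.last n) ≠ 0) :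
    ∃ g δ, Prof (fun p => u (insL n p)) ξ (ell ξ) g δ := by
  have hU : Measurable (fun p => u (insL n p)) := hmeas.comp (insL_cont n).measurable
  obtain ⟨δ, hδ', g, h1, h2, h3, h4⟩ := exists_profile hU ξ (ell ξ) hδ0 (by
    intro z
    have hs := chi_shift hΩ hmeas hkin hξ1 (ell_inner hξ z)
    have hs' := (insL_mp n).quasiMeasurePreserving.ae hs
    filter_upwards [hs'] with p hp hp2
    have h5 := hp (fun s hs => by
      rw [insL_line]
      exact hδ _ (hp2 s hs).1 (hp2 s hs).2)
    have h6 := insL_line p z (ell ξ z) 1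
    rw [one_smul, one_smul, one_mul] at h6
    rw [h6] at h5
    exact h5)
  exact ⟨g, δ, hδ', h1, h2, h3, h4⟩

lemma leb_transfer {n : ℕ} {Ω : Set (EuclideanSpace ℝ (Fin (n + 1)))} (hΩ : IsOpen Ω)
    {u : EuclideanSpace ℝ (Fin (n + 1)) → EuclideanSpace ℝ (Fin (n + 1))} (hmeas : Measurable u)
    (hunit : ∀ᵐ x, x ∈ Ω → ‖u x‖ = 1) {t0 : ℝ} (ht0 : insL n (0, t0) ∈ Ω)
    {w : EuclideanSpace ℝ (Fin (n + 1))} (hL : IsLebesguePoint u (insL n (0, t0)) w) :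
    ‖w‖ = 1 ∧ Tendsto (fun r => (∫ p in ball (0 : Fin n → ℝ) r ×ˢ ball t0 r,
      ‖u (insL n p) - w‖) / r ^ (n + 1)) (𝓝[>] 0) (𝓝 0) := by
  unfold IsLebesguePoint at hL
  set x0 := insL n (0, t0) with hx0
  obtain ⟨ρ, hρ, hball⟩ := Metric.isOpen_iff.1 hΩ x0 ht0
  have hun : ∀ r, r ≤ ρ → ∀ᵐ x ∂(volume.restrict (ball x0 r)), ‖u x‖ = 1 := by
    intro r hr
    rw [ae_restrict_iff' measurableSet_ball]
    filter_upwards [hunit] with x hx hxr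
    exact hx (hball (ball_subset_ball hr hxr))
  have hfin : ∀ r, IsFiniteMeasure (volume.restrict (ball x0 r)) := fun r =>
    ⟨by rw [Measure.restrict_apply_univ]; exact measure_ball_lt_top⟩
  have hi : ∀ r, r ≤ ρ → IntegrableOn (fun x => ‖u x - w‖) (ball x0 r) := by
    intro r hr
    have := hfin r
    refine integrable_of_bdd (hmeas.sub_const w).norm.aestronglyMeasurable (C := 1 + ‖w‖) ?_
    filter_upwards [hun r hr] with x hx
    rw [norm_norm]
    exact (norm_sub_le _ _).trans (by rw [hx])
  constructor
  · have h0 : |1 - ‖w‖| ≤ 0 := by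
      refine ge_of_tendsto hL ?_
      filter_upwards [ev_pos_lt hρ] with r hr
      have := hfin r
      have hpos : 0 < volume.real (ball x0 r) :=
        ENNReal.toReal_pos (measure_ball_pos _ _ hr.1).ne' measure_ball_lt_top.ne
      have hm := integral_mono_ae (integrable_const (|1 - ‖w‖|)) (hi r hr.2.le) (by
        filter_upwards [hun r hr.2.le] with x hx
        rw [← hx]
        exact abs_norm_sub_norm_le _ _)
      rw [integral_const, measureReal_restrict_apply_univ, smul_eq_mul] at hm
      rw [setAverage_eq, smul_eq_mul, inv_mul_eq_div, le_div_iff₀ hpos]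
      linarith
    have := abs_nonpos_iff.1 h0
    linarith
  · set L := LinearMap.toContinuousLinearMap (insL n) with hLdef
    set C := ‖L‖ + 1 with hC
    have hC0 : 0 < C := by positivity
    have hCt : Tendsto (fun r : ℝ => C * r) (𝓝[>] 0) (𝓝[>] 0) := by
      rw [tendsto_nhdsWithin_iff]
      refine ⟨?_, ?_⟩
      · have : Tendsto (fun r : ℝ => C * r) (𝓝 0) (𝓝 (C * 0)) := tendsto_id.const_mul C
        rw [mul_zero] at this
        exact this.mono_left nhdsWithin_le_nhds
      · filter_upwards [self_mem_nhdsWithin] with r hr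
        have : 0 < r := hr
        simp only [mem_Ioi]; positivity
    have hlim := (hL.comp hCt).const_mul
      (C ^ (n + 1) * volume.real (ball (0 : EuclideanSpace ℝ (Fin (n + 1))) 1))
    rw [mul_zero] at hlim
    refine squeeze_zero' ?_ ?_ hlim
    · filter_upwards [ev_pos_lt hρ] with r hr
      have := hr.1
      exact div_nonneg (integral_nonneg fun _ => norm_nonneg _) (by positivity)
    filter_upwards [ev_pos_lt (div_pos hρ hC0)] with r hr
    obtain ⟨hr0, hr1⟩ := hr
    rw [lt_div_iff₀ hC0, mul_comm] at hr1
    have hCr : 0 < C * r := by positivity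
    have hsub : ball (0 : Fin n → ℝ) r ×ˢ ball t0 r ⊆ insL n ⁻¹' ball x0 (C * r) := by
      intro p hp
      rw [mem_preimage, mem_ball, dist_eq_norm, hx0, ← map_sub]
      have h1 : ‖p - (0, t0)‖ < r := by
        rw [← dist_eq_norm, Prod.dist_eq, max_lt_iff]
        exact hp
      have h2 := L.le_opNorm (p - (0, t0))
      have h3 : ‖L‖ * ‖p - (0, t0)‖ ≤ ‖L‖ * r := by gcongr
      calc ‖insL n (p - (0, t0))‖ ≤ ‖L‖ * r := h2.trans h3
        _ < C * r := by rw [hC]; linarith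
    have hmp := (insL_mp n).restrict_preimage (measurableSet_ball (x := x0) (ε := C * r))
    have hii := hi (C * r) hr1.le
    have hii2 : IntegrableOn (fun p => ‖u (insL n p) - w‖) (insL n ⁻¹' ball x0 (C * r)) :=
      (hmp.integrable_comp (hmeas.sub_const w).norm.aestronglyMeasurable).2 hii
    have h4 : ∫ p in ball (0 : Fin n → ℝ) r ×ˢ ball t0 r, ‖u (insL n p) - w‖ ≤
        ∫ p in insL n ⁻¹' ball x0 (C * r), ‖u (insL n p) - w‖ :=
      setIntegral_mono_set hii2 (Eventually.of_forall fun _ => norm_nonneg _) hsub.eventuallyLE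
    have h5 : ∫ p in insL n ⁻¹' ball x0 (C * r), ‖u (insL n p) - w‖ =
        ∫ x in ball x0 (C * r), ‖u x - w‖ := by
      have h6 := integral_map (f := fun x => ‖u x - w‖)
        (μ := volume.restrict (insL n ⁻¹' ball x0 (C * r))) hmp.measurable.aemeasurable
        (hmeas.sub_const w).norm.aestronglyMeasurable
      rw [hmp.map_eq] at h6
      exact h6.symm
    have h7 : volume.real (ball x0 (C * r)) =
        (C * r) ^ (n + 1) * volume.real (ball (0 : EuclideanSpace ℝ (Fin (n + 1))) 1) := by
      rw [Measure.real, Measure.addHaar_ball _ _ hCr.le, ENNReal.toReal_mul,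
        ENNReal.toReal_ofReal (by positivity), finrank_euclideanSpace_fin, Measure.real]
    have hpos : 0 < volume.real (ball x0 (C * r)) :=
      ENNReal.toReal_pos (measure_ball_pos _ _ hCr).ne' measure_ball_lt_top.ne
    have h8 : ∫ x in ball x0 (C * r), ‖u x - w‖ =
        volume.real (ball x0 (C * r)) * ⨍ x in ball x0 (C * r), ‖u x - w‖ := by
      rw [setAverage_eq, smul_eq_mul, mul_inv_cancel_left₀ hpos.ne']
    rw [h5, h8, h7] at h4
    simp only [Function.comp_apply]
    rw [div_le_iff₀ (by positivity)]
    refine h4.trans (le_of_eq ?_)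
    rw [mul_pow]
    ring

theorem trace_on_segment (N : ℕ) (hN : 2 ≤ N)
    (Ω : Set (EuclideanSpace ℝ (Fin N))) (hΩ : IsOpen Ω)
    (hL : (fun t => ins N 0 t) '' Icc (-1 : ℝ) 1 ⊆ Ω)
    (u : EuclideanSpace ℝ (Fin N) → EuclideanSpace ℝ (Fin N)) (hmeas : Measurable u)
    (hunit : ∀ᵐ x ∂volume.restrict Ω, ‖u x‖ = 1)
    (hkin : KineticFormulation Ω u) :
    ∃ utild : ℝ → EuclideanSpace ℝ (Fin N), Measurable utild ∧
      Tendsto (fun r : ℝ =>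
          ⨍ y in cube N r, ∫ t in Ioo (-1 : ℝ) 1, ‖u (ins N y t) - utild t‖)
        (𝓝[>] 0) (𝓝 0) ∧
      (∀ᵐ t ∂volume.restrict (Ioo (-1 : ℝ) 1), ‖utild t‖ = 1 ∧
        Tendsto (fun r : ℝ => ⨍ y in cube N r, u (ins N y t)) (𝓝[>] 0) (𝓝 (utild t))) ∧
      (∀ t ∈ Ioo (-1 : ℝ) 1, ∀ w : EuclideanSpace ℝ (Fin N),
        IsLebesguePoint u (ins N 0 t) w →
          IsLebesguePoint utild t w ∧ utild t = w) := by
  obtain ⟨n, rfl⟩ : ∃ n, N = n + 1 := ⟨N - 1, by omega⟩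
  obtain ⟨δ0, hδ0, hδ⟩ := exists_delta hΩ hL
  have hunit' : ∀ᵐ x, x ∈ Ω → ‖u x‖ = 1 := (ae_restrict_iff' hΩ.measurableSet).1 hunit
  have hU : Measurable (fun p => u (insL n p)) := hmeas.comp (insL_cont n).measurable
  have hun : ∀ᵐ p : (Fin n → ℝ) × ℝ, ‖p.1‖ < δ0 → |p.2| < 1 + δ0 → ‖u (insL n p)‖ = 1 := by
    filter_upwards [(insL_mp n).quasiMeasurePreserving.ae hunit'] with p hp h1 h2
    exact hp (hδ p h1 h2)
  have hsep := fun k : ℕ => exists_sep (N := n + 1) (Fin.last n)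
    (show (0:ℝ) < 1 / ((k:ℝ) + 1) by positivity)
  choose F hF1 hF2 using hsep
  have hpr : ∀ ξ : EuclideanSpace ℝ (Fin (n + 1)), ∃ g δ, (‖ξ‖ = 1 ∧ ξ (Fin.last n) ≠ 0) →
      Prof (fun p => u (insL n p)) ξ (ell ξ) g δ := by
    intro ξ
    by_cases h : ‖ξ‖ = 1 ∧ ξ (Fin.last n) ≠ 0
    · obtain ⟨g, δ, hg⟩ := exists_prof hΩ hmeas hkin hδ0 hδ h.1 h.2
      exact ⟨g, δ, fun _ => hg⟩
    · exact ⟨fun _ => 0, 0, fun h' => absurd h' h⟩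
  choose g δ hg using hpr
  obtain ⟨f, hf, hi, hii, hiii⟩ := product_main hU hδ0 hun hF2 (fun k ξ hξ => (hF1 k ξ hξ).1)
    (fun k ξ hξ => hg ξ (hF1 k ξ hξ))
  refine ⟨f, hf, ?_, ?_, ?_⟩
  · refine hi.congr' ?_
    filter_upwards [self_mem_nhdsWithin] with r hr
    rw [cube_eq n hr]
    rfl
  · rw [ae_restrict_iff' measurableSet_Ioo]
    filter_upwards [hii] with t ht ht1
    obtain ⟨h1, h2⟩ := ht (abs_lt.2 ht1)
    refine ⟨h1, h2.congr' ?_⟩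
    filter_upwards [self_mem_nhdsWithin] with r hr
    rw [cube_eq n hr]
    rfl
  · intro t ht w hw
    have ht' : |t| < 1 := abs_lt.2 ht
    obtain ⟨h1, h2⟩ := leb_transfer hΩ hmeas hunit'
      (hL ⟨t, Ioo_subset_Icc_self ht, rfl⟩) (w := w) hw
    exact hiii t ht' w h1 h2
end
end

section
/- Let N ≥ 3, Ω ⊆ ℝ^N a connected open set, and u : Ω → ℝ^N a Lebesgue measurable vector field with |u| = 1 a.e. in Ω that satisfies the kinetic formulation and is not a.e. equal to a constant vector. Then there exist a point P ∈ ℝ^N and a sign γ ∈ {+1, −1} such that u(x) = γ (x − P)/|x − P| for a.e. x ∈ Ω. -/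
open MeasureTheory Metric Set Filter
open scoped RealInnerProductSpace ENNReal Topology

noncomputable section

theorem null_plane {N : ℕ} (hN : 3 ≤ N) (P a b : EuclideanSpace ℝ (Fin N)) :
    ∀ᵐ z : EuclideanSpace ℝ (Fin N), ∀ s t : ℝ, z - P ≠ s • a + t • b := by
  have h1 : volume ((fun z => z - P) ⁻¹' (Submodule.span ℝ {a, b} : Set (EuclideanSpace ℝ (Fin N)))) = 0 := by
    have : (Submodule.span ℝ {a, b} : Submodule ℝ (EuclideanSpace ℝ (Fin N))) ≠ ⊤ := by
      intro h
      have h2 : Module.finrank ℝ (Submodule.span ℝ (({a, b} : Finset (EuclideanSpace ℝ (Fin N))) : Set (EuclideanSpace ℝ (Fin N)))) ≤ _ :=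
        finrank_span_finset_le_card (R := ℝ) ({a, b} : Finset (EuclideanSpace ℝ (Fin N)))
      have h3 : ({a, b} : Finset (EuclideanSpace ℝ (Fin N))).card ≤ 2 := Finset.card_le_two
      rw [Finset.coe_pair, h, finrank_top, finrank_euclideanSpace_fin] at h2
      omega
    have h4 := Measure.addHaar_submodule (volume : Measure (EuclideanSpace ℝ (Fin N))) _ this
    simpa [sub_eq_add_neg] using h4
  rw [ae_iff]
  refine measure_mono_null ?_ h1
  intro z hz
  simp only [not_forall, not_not, mem_ofPred_eq] at hz
  obtain ⟨s, t, h⟩ := hz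
  exact Submodule.mem_span_pair.2 ⟨s, t, h.symm⟩

theorem exists_perp {N : ℕ} (a d : EuclideanSpace ℝ (Fin N)) (h : ∀ s : ℝ, a ≠ s • d) :
    ∃ ξ, ⟪d, ξ⟫ = 0 ∧ 0 < ⟪a, ξ⟫ := by
  have hd : ⟪d, a - (⟪d, a⟫ / ⟪d, d⟫) • d⟫ = 0 := by
    rw [inner_sub_right, inner_smul_right]
    by_cases h0 : d = 0
    · simp [h0]
    · have : ⟪d, d⟫ ≠ 0 := inner_self_ne_zero.2 h0
      field_simp
      ring
  refine ⟨a - (⟪d, a⟫ / ⟪d, d⟫) • d, hd, ?_⟩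
  have h1 : a - (⟪d, a⟫ / ⟪d, d⟫) • d ≠ 0 := sub_ne_zero.2 (h _)
  have h2 : 0 < ⟪a - (⟪d, a⟫ / ⟪d, d⟫) • d, a - (⟪d, a⟫ / ⟪d, d⟫) • d⟫ := real_inner_self_pos.2 h1
  rw [inner_sub_left, inner_smul_left, hd] at h2
  simpa using h2

theorem coplanar_of_pair {N : ℕ} (a b d : EuclideanSpace ℝ (Fin N))
    (hab : LinearIndependent ℝ ![a, b])
    (hC : ∀ ξ, ⟪d, ξ⟫ = 0 → 0 < ⟪a, ξ⟫ → ⟪b, ξ⟫ < 0 → False) :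
    ∃ s t : ℝ, d = s • a + t • b := by
  by_contra hne
  have hd : d ∉ Submodule.span ℝ (Set.range ![a, b]) := by
    intro h
    simp only [Matrix.range_cons, Matrix.range_empty, union_empty, singleton_union] at h
    obtain ⟨s, t, h⟩ := Submodule.mem_span_pair.1 h
    exact hne ⟨s, t, h.symm⟩
  have hl : LinearIndependent ℝ (![d, a, b] : Fin 3 → EuclideanSpace ℝ (Fin N)) :=
    linearIndependent_finCons.2 ⟨hab, hd⟩
  let B := Module.Basis.span hl
  obtain ⟨g, hg⟩ := LinearMap.exists_extend (B.constr ℝ (![0, 1, -1] : Fin 3 → ℝ))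
  have hgi : ∀ i, g ((![d, a, b] : Fin 3 → EuclideanSpace ℝ (Fin N)) i) = (![0, 1, -1] : Fin 3 → ℝ) i := by
    intro i
    have h1 := LinearMap.congr_fun hg (B i)
    rw [Module.Basis.constr_basis, LinearMap.comp_apply, Submodule.subtype_apply,
      Module.Basis.span_apply] at h1
    exact h1
  let ξ := (InnerProductSpace.toDual ℝ (EuclideanSpace ℝ (Fin N))).symm g.toContinuousLinearMap
  have hξ : ∀ z, ⟪z, ξ⟫ = g z := by
    intro z
    rw [real_inner_comm]
    simp [ξ]
  refine hC ξ ?_ ?_ ?_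
  · rw [hξ]; simpa using hgi 0
  · rw [hξ]; have := hgi 1; simp at this; simp [this]
  · rw [hξ]; have := hgi 2; simp at this; simp [this]

/-- Constant fields and vortices. -/
def Model {N : ℕ} (f : EuclideanSpace ℝ (Fin N) → EuclideanSpace ℝ (Fin N)) : Prop :=
  (∃ c, f = fun _ => c) ∨
    ∃ P, ∃ γ : ℝ, (γ = 1 ∨ γ = -1) ∧ f = fun x => γ • (‖x - P‖⁻¹ • (x - P))

theorem vortex_const {N : ℕ} (hN : 3 ≤ N) {W : Set (EuclideanSpace ℝ (Fin N))}
    (hW : volume W ≠ 0) (c P : EuclideanSpace ℝ (Fin N)) (γ : ℝ) (hγ : γ = 1 ∨ γ = -1)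
    (h : ∀ᵐ x ∂volume.restrict W, c = γ • (‖x - P‖⁻¹ • (x - P))) : False := by
  have : NeBot (ae (volume.restrict W)) := ae_neBot.2 (by simpa using hW)
  obtain ⟨x, h1, h2⟩ := (h.and (ae_restrict_of_ae (null_plane hN P c 0))).exists
  by_cases hx : x - P = 0
  · exact h2 0 0 (by simp [hx])
  · apply h2 (γ * ‖x - P‖) 0
    have : ‖x - P‖ ≠ 0 := norm_ne_zero_iff.2 hx
    have hg : γ * γ = 1 := by rcases hγ with rfl | rfl <;> norm_num
    rw [h1]
    simp only [smul_smul, smul_zero, add_zero]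
    rw [show γ * ‖x - P‖ * (γ * ‖x - P‖⁻¹) = (γ * γ) * (‖x - P‖ * ‖x - P‖⁻¹) by ring, hg,
      mul_inv_cancel₀ this]
    simp

theorem model_unique {N : ℕ} (hN : 3 ≤ N) {W : Set (EuclideanSpace ℝ (Fin N))}
    (hW : volume W ≠ 0) {f g : EuclideanSpace ℝ (Fin N) → EuclideanSpace ℝ (Fin N)}
    (hf : Model f) (hg : Model g) (h : f =ᵐ[volume.restrict W] g) : f = g := by
  have : NeBot (ae (volume.restrict W)) := ae_neBot.2 (by simpa using hW)
  rcases hf with ⟨c, rfl⟩ | ⟨P, γ, hγ, rfl⟩ <;> rcases hg with ⟨c', rfl⟩ | ⟨P', γ', hγ', rfl⟩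
  · obtain ⟨x, hx⟩ := h.exists
    funext _; exact hx
  · exact (vortex_const hN hW c P' γ' hγ' h).elim
  · exact (vortex_const hN hW c' P γ hγ (h.mono fun x hx => hx.symm)).elim
  · obtain ⟨x, ⟨h1, h2⟩, h3⟩ := ((h.and (ae_restrict_of_ae (null_plane hN P (P' - P) 0))).and
      (ae_restrict_of_ae (null_plane hN P' (P' - P) 0))).exists
    have hx : x - P ≠ 0 := fun hx => h2 0 0 (by simp [hx])
    have hx' : x - P' ≠ 0 := fun hx => h3 0 0 (by simp [hx])
    have hn : 0 < ‖x - P‖ := norm_pos_iff.2 hx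
    have hn' : 0 < ‖x - P'‖ := norm_pos_iff.2 hx'
    simp only [smul_smul] at h1
    have hγ0 : γ ≠ 0 := by rcases hγ with rfl | rfl <;> norm_num
    set k : ℝ := γ * ‖x - P‖⁻¹ with hk
    set k' : ℝ := γ' * ‖x - P'‖⁻¹ with hk'
    have hk0 : k ≠ 0 := mul_ne_zero hγ0 (inv_ne_zero hn.ne')
    by_cases hkk : k = k'
    · rw [← hkk] at h1
      have h4 := smul_right_injective _ hk0 h1
      have hP : P = P' := by simpa using h4
      subst hP
      have : γ = γ' := mul_right_cancel₀ (inv_ne_zero hn.ne') (hk.symm.trans (hkk.trans hk'))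
      rw [this]
    · exfalso
      apply h2 (- k' / (k - k')) 0
      have hs : k - k' ≠ 0 := sub_ne_zero.2 hkk
      have h5 : (k - k') • (x - P) = (-k') • (P' - P) := by
        have : x - P' = (x - P) - (P' - P) := by abel
        rw [this, smul_sub k' (x - P)] at h1
        rw [sub_smul, h1, neg_smul]; abel
      rw [zero_smul, add_zero, div_eq_inv_mul, mul_smul, ← h5, smul_smul, inv_mul_cancel₀ hs, one_smul]

theorem local_class {N : ℕ} (hN : 3 ≤ N) {W : Set (EuclideanSpace ℝ (Fin N))}
    (hW : volume W ≠ 0) (u : EuclideanSpace ℝ (Fin N) → EuclideanSpace ℝ (Fin N))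
    (G : Set (EuclideanSpace ℝ (Fin N))) (hG : ∀ᵐ x ∂volume.restrict W, x ∈ G)
    (hu : ∀ x ∈ G, ‖u x‖ = 1)
    (hC : ∀ x ∈ G, ∀ y ∈ G, ∀ ξ, ⟪y - x, ξ⟫ = 0 → 0 < ⟪u x, ξ⟫ → ⟪u y, ξ⟫ < 0 → False) :
    ∃ f, Model f ∧ u =ᵐ[volume.restrict W] f := by
  have : NeBot (ae (volume.restrict W)) := ae_neBot.2 (by simpa using hW)
  have hu0 : ∀ x ∈ G, u x ≠ 0 := fun x hx h => by simpa [h] using hu x hx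
  by_cases hcase : ∃ x ∈ G, ∃ y ∈ G, LinearIndependent ℝ ![u x, u y]
  · obtain ⟨x, hx, y, hy, hxy⟩ := hcase
    obtain ⟨s, t, hst⟩ := coplanar_of_pair _ _ _ hxy (hC x hx y hy)
    set P := x + s • u x with hP
    have hP' : P = y - t • u y := by
      rw [eq_sub_iff_add_eq, hP, add_assoc, ← hst]; abel
    have key : ∀ z ∈ G, (∀ s t : ℝ, z - P ≠ s • u x + t • u y) → ∃ β : ℝ, z - P = β • u z := by
      intro z hz hzP
      have LI : ∀ w ∈ G, ∀ w' ∈ G, LinearIndependent ℝ ![u w, u w'] ∨ ∃ c : ℝ, c • u w = u w' := by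
        intro w hw w' hw'
        by_cases h : ∃ c : ℝ, c • u w = u w'
        · exact Or.inr h
        · left
          rw [LinearIndependent.pair_iff' (hu0 w hw)]
          simpa using h
      have hzx : LinearIndependent ℝ ![u x, u z] := by
        rcases LI x hx z hz with h | ⟨c, hc⟩
        · exact h
        · exfalso
          have hc0 : c ≠ 0 := by rintro rfl; exact hu0 z hz (by simpa using hc.symm)
          have h1 : LinearIndependent ℝ ![u y, u z] := by
            rcases LI y hy z hz with h | ⟨c', hc'⟩
            · exact h
            · exfalso
              have := (LinearIndependent.pair_iff.1 hxy) c (-c') (by rw [hc, neg_smul, hc']; abel)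
              exact hc0 this.1
          obtain ⟨p, q, hpq⟩ := coplanar_of_pair _ _ _ h1 (hC y hy z hz)
          apply hzP (q * c) (p + t)
          rw [hP', sub_sub_eq_add_sub, add_sub_right_comm, hpq, ← hc, smul_smul, add_smul]; abel
      have hzy : LinearIndependent ℝ ![u y, u z] := by
        rcases LI y hy z hz with h | ⟨c, hc⟩
        · exact h
        · exfalso
          obtain ⟨p, q, hpq⟩ := coplanar_of_pair _ _ _ hzx (hC x hx z hz)
          apply hzP (p - s) (q * c)
          rw [hP, ← sub_sub, hpq, ← hc, smul_smul, sub_smul]; abel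
      obtain ⟨p, q, hpq⟩ := coplanar_of_pair _ _ _ hzx (hC x hx z hz)
      obtain ⟨p', q', hpq'⟩ := coplanar_of_pair _ _ _ hzy (hC y hy z hz)
      have e1 : z - P = (p - s) • u x + q • u z := by
        rw [hP, ← sub_sub, hpq, sub_smul]; abel
      have e2 : z - P = (p' + t) • u y + q' • u z := by
        rw [hP', sub_sub_eq_add_sub, add_sub_right_comm, hpq', add_smul]; abel
      have hqq : q = q' := by
        by_contra hqq
        have hs : q - q' ≠ 0 := sub_ne_zero.2 hqq
        have e3 : (q - q') • u z = (p' + t) • u y - (p - s) • u x := by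
          rw [sub_smul, sub_eq_sub_iff_add_eq_add, add_comm, ← e1, e2]
        have e4 : u z = (q - q')⁻¹ • ((p' + t) • u y - (p - s) • u x) := by
          rw [← e3, smul_smul, inv_mul_cancel₀ hs, one_smul]
        apply hzP ((p - s) - q * (q - q')⁻¹ * (p - s)) (q * (q - q')⁻¹ * (p' + t))
        rw [e1, e4]
        module
      subst hqq
      have := (LinearIndependent.pair_iff.1 hxy) (p - s) (-(p' + t)) (by
        rw [neg_smul, ← sub_eq_add_neg, sub_eq_zero]
        exact add_right_cancel (e1.symm.trans e2))
      exact ⟨q, by rw [e1, this.1, zero_smul, zero_add]⟩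
    have key2 : ∀ᵐ z ∂volume.restrict W, z ∈ G ∧ z ≠ P ∧ ∃ β : ℝ, z - P = β • u z := by
      filter_upwards [hG, ae_restrict_of_ae (null_plane hN P (u x) (u y))] with z h1 h2
      exact ⟨h1, fun h => h2 0 0 (by simp [h]), key z h1 h2⟩
    have key3 : ∀ z ∈ G, z ≠ P → ∀ β : ℝ, z - P = β • u z →
        ∃ γ : ℝ, (γ = 1 ∨ γ = -1) ∧ u z = γ • (‖z - P‖⁻¹ • (z - P)) := by
      intro z hz hzP β hβ
      have hb0 : β ≠ 0 := by
        rintro rfl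
        exact hzP (by simpa [sub_eq_zero] using hβ)
      have hn : ‖z - P‖ = |β| := by rw [hβ, norm_smul, hu z hz]; simp
      have hβ' : |β|⁻¹ • (z - P) = (|β|⁻¹ * β) • u z := by rw [hβ, smul_smul]
      rw [hn, hβ']
      rcases lt_or_gt_of_ne hb0 with h | h
      · refine ⟨-1, Or.inr rfl, ?_⟩
        rw [abs_of_neg h, smul_smul]
        have : (-1 : ℝ) * ((-β)⁻¹ * β) = 1 := by field_simp
        rw [this, one_smul]
      · refine ⟨1, Or.inl rfl, ?_⟩
        rw [abs_of_pos h, inv_mul_cancel₀ hb0]; simp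
    obtain ⟨z0, hz0, hz0P, β0, hβ0⟩ := key2.exists
    obtain ⟨γ, hγ, hγz⟩ := key3 z0 hz0 hz0P β0 hβ0
    refine ⟨_, Or.inr ⟨P, γ, hγ, rfl⟩, ?_⟩
    filter_upwards [key2, ae_restrict_of_ae (null_plane hN P (z0 - P) 0)] with w ⟨hw, hwP, β, hβ⟩ hline
    obtain ⟨γ', hγ', hγw⟩ := key3 w hw hwP β hβ
    have hn0 : 0 < ‖z0 - P‖⁻¹ := inv_pos.2 (norm_pos_iff.2 (sub_ne_zero.2 hz0P))
    have hnw : 0 < ‖w - P‖⁻¹ := inv_pos.2 (norm_pos_iff.2 (sub_ne_zero.2 hwP))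
    suffices γ = γ' by rw [this]; exact hγw
    obtain ⟨ξ, hξ, hpos⟩ := exists_perp (z0 - P) (w - z0) (by
      intro k hk
      by_cases hk0 : k = 0
      · subst hk0; exact hz0P (by simpa [sub_eq_zero] using hk)
      · apply hline (1 + k⁻¹) 0
        rw [add_smul]
        nth_rw 2 [hk]
        rw [smul_smul, inv_mul_cancel₀ hk0]
        module)
    have hwξ : ⟪w - P, ξ⟫ = ⟪z0 - P, ξ⟫ := by
      have : w - P = (w - z0) + (z0 - P) := by abel
      rw [this, inner_add_left, hξ, zero_add]
    have i1 : ⟪u z0, ξ⟫ = γ * (‖z0 - P‖⁻¹ * ⟪z0 - P, ξ⟫) := by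
      rw [hγz]; simp only [real_inner_smul_left]
    have i2 : ⟪u w, ξ⟫ = γ' * (‖w - P‖⁻¹ * ⟪z0 - P, ξ⟫) := by
      rw [hγw]; simp only [real_inner_smul_left, hwξ]
    have p1 := mul_pos hn0 hpos
    have p2 := mul_pos hnw hpos
    have hξ' : ⟪z0 - w, ξ⟫ = 0 := by
      rw [← neg_sub, inner_neg_left, hξ, neg_zero]
    rcases hγ with h | h <;> rcases hγ' with h' | h' <;> rw [h] at i1 ⊢ <;> rw [h'] at i2 ⊢
    · exact (hC z0 hz0 w hw ξ hξ (by linarith) (by linarith)).elim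
    · exact (hC w hw z0 hz0 ξ hξ' (by linarith) (by linarith)).elim
  · push Not at hcase
    obtain ⟨x, hx⟩ := hG.exists
    refine ⟨_, Or.inl ⟨u x, rfl⟩, ?_⟩
    filter_upwards [hG, ae_restrict_of_ae (null_plane hN x (u x) 0)] with y hy hline
    have h1 := hcase x hx y hy
    rw [LinearIndependent.pair_iff' (hu0 x hx)] at h1
    push Not at h1
    obtain ⟨c, hc⟩ := h1
    have hc1 : |c| = 1 := by
      have := congrArg norm hc
      rw [norm_smul, hu x hx, hu y hy] at this
      simpa using this
    rcases eq_or_eq_neg_of_abs_eq hc1 with rfl | rfl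
    · simpa using hc.symm
    · exfalso
      obtain ⟨ξ, hξ, hpos⟩ := exists_perp (u x) (y - x) (by
        intro k hk
        by_cases hk0 : k = 0
        · subst hk0; exact hu0 x hx (by simpa using hk)
        · apply hline k⁻¹ 0
          rw [hk, smul_smul, inv_mul_cancel₀ hk0]; simp)
      refine hC x hx y hy ξ hξ hpos ?_
      rw [← hc, real_inner_smul_left]; linarith

theorem chi_measurable {N : ℕ} {u : EuclideanSpace ℝ (Fin N) → EuclideanSpace ℝ (Fin N)}
    (hu : Measurable u) (ξ : EuclideanSpace ℝ (Fin N)) : Measurable (fun z => chi u z ξ) := by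
  unfold chi
  exact Measurable.ite (measurableSet_lt measurable_const (hu.inner measurable_const))
    measurable_const measurable_const

theorem chi_norm_le {N : ℕ} (u : EuclideanSpace ℝ (Fin N) → EuclideanSpace ℝ (Fin N))
    (z ξ : EuclideanSpace ℝ (Fin N)) : ‖chi u z ξ‖ ≤ 1 := by
  unfold chi; split_ifs <;> simp

theorem transport {N : ℕ} {Ω : Set (EuclideanSpace ℝ (Fin N))} (hΩ : IsOpen Ω)
    {u : EuclideanSpace ℝ (Fin N) → EuclideanSpace ℝ (Fin N)} (hu : Measurable u)
    (hkin : KineticFormulation Ω u) {c x v ξ : EuclideanSpace ℝ (Fin N)} {R ρ : ℝ}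
    (hB : ball c R ⊆ Ω) (hξ : ‖ξ‖ = 1) (hv : ⟪v, ξ⟫ = 0)
    (h0 : dist x c + ρ < R) (h1 : dist (x + v) c + ρ < R)
    (ψ : EuclideanSpace ℝ (Fin N) → ℝ) (hψ : ContDiff ℝ (⊤ : ℕ∞) ψ)
    (hsupp : tsupport ψ ⊆ closedBall x ρ) :
    ∫ z in ball c R, chi u z ξ * ψ z = ∫ z in ball c R, chi u z ξ * ψ (z - v) := by
  have hcs : HasCompactSupport ψ :=
    (isCompact_closedBall x ρ).of_isClosed_subset (isClosed_tsupport ψ) hsupp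
  have hdiff : Differentiable ℝ ψ := hψ.differentiable (by simp)
  have hcd : Continuous (fderiv ℝ ψ) := hψ.continuous_fderiv (by simp)
  obtain ⟨C1, hC1⟩ := hcs.exists_bound_of_continuous hψ.continuous
  obtain ⟨C2, hC2⟩ := (hcs.fderiv ℝ).exists_bound_of_continuous hcd
  have hsub : ∀ t : ℝ, Continuous (fun z : EuclideanSpace ℝ (Fin N) => z - t • v) := fun t => by fun_prop
  have hfin : IsFiniteMeasure (volume.restrict (ball c R)) :=
    ⟨by rw [Measure.restrict_apply_univ]; exact measure_ball_lt_top⟩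
  have hcm := chi_measurable hu ξ
  -- derivative of the translated integral
  have hder : ∀ t : ℝ, HasDerivAt (fun t : ℝ => ∫ z in ball c R, chi u z ξ * ψ (z - t • v))
      (∫ z in ball c R, chi u z ξ * (-(fderiv ℝ ψ (z - t • v) v))) t := by
    intro t
    refine (hasDerivAt_integral_of_dominated_loc_of_deriv_le (μ := volume.restrict (ball c R))
      (F := fun t z => chi u z ξ * ψ (z - t • v))
      (F' := fun t z => chi u z ξ * (-(fderiv ℝ ψ (z - t • v) v)))
      (bound := fun _ => C2 * ‖v‖) (s := univ) univ_mem ?_ ?_ ?_ ?_ ?_ ?_).2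
    · exact Eventually.of_forall fun t =>
        (hcm.mul (hψ.continuous.comp (hsub t)).measurable).aestronglyMeasurable
    · refine Integrable.of_bound (C := C1)
        (hcm.mul (hψ.continuous.comp (hsub t)).measurable).aestronglyMeasurable
        (Eventually.of_forall fun z => ?_)
      rw [norm_mul]
      exact (mul_le_of_le_one_left (norm_nonneg _) (chi_norm_le _ _ _)).trans (hC1 _)
    · have : Continuous (fun z => -(fderiv ℝ ψ (z - t • v) v)) :=
        ((hcd.comp (hsub t)).clm_apply continuous_const).neg
      exact (hcm.mul this.measurable).aestronglyMeasurable
    · refine Eventually.of_forall fun z s _ => ?_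
      rw [norm_mul, norm_neg]
      refine (mul_le_of_le_one_left (norm_nonneg _) (chi_norm_le _ _ _)).trans ?_
      exact (ContinuousLinearMap.le_opNorm _ _).trans
        (mul_le_mul_of_nonneg_right (hC2 _) (norm_nonneg _))
    · exact integrable_const _
    · refine Eventually.of_forall fun z s _ => ?_
      refine HasDerivAt.const_mul _ ?_
      have hl : HasDerivAt (fun s : ℝ => z - s • v) (-v) s := by
        simpa using ((hasDerivAt_id s).smul_const v).const_sub z
      have := (hdiff (z - s • v)).hasFDerivAt.comp_hasDerivAt s hl
      rw [map_neg] at this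
      exact this
  have hzero : ∀ t ∈ Icc (0 : ℝ) 1, ∫ z in ball c R, chi u z ξ * (-(fderiv ℝ ψ (z - t • v) v)) = 0 := by
    intro t ht
    let φ : EuclideanSpace ℝ (Fin N) → ℝ := fun z => ψ (z - t • v)
    have hφ : ContDiff ℝ (⊤ : ℕ∞) φ := hψ.comp (contDiff_id.sub contDiff_const)
    have hts : tsupport φ ⊆ closedBall (x + t • v) ρ := by
      refine closure_minimal ?_ isClosed_closedBall
      intro z hz
      have : z - t • v ∈ closedBall x ρ := hsupp (subset_tsupport ψ hz)
      rw [mem_closedBall, dist_eq_norm] at this ⊢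
      rwa [show z - (x + t • v) = z - t • v - x by abel]
    have hcv : closedBall (x + t • v) ρ ⊆ ball c R := by
      apply closedBall_subset_ball'
      have e : x + t • v - c = (1 - t) • (x - c) + t • (x + v - c) := by module
      rw [dist_eq_norm] at h0 h1 ⊢
      have : ‖x + t • v - c‖ ≤ (1 - t) * ‖x - c‖ + t * ‖x + v - c‖ := by
        rw [e]
        refine (norm_add_le _ _).trans ?_
        rw [norm_smul, norm_smul, Real.norm_of_nonneg ht.1, Real.norm_of_nonneg (sub_nonneg.2 ht.2)]
      have a1 : (1 - t) * ‖x - c‖ ≤ (1 - t) * max ‖x - c‖ ‖x + v - c‖ :=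
        mul_le_mul_of_nonneg_left (le_max_left _ _) (sub_nonneg.2 ht.2)
      have a2 : t * ‖x + v - c‖ ≤ t * max ‖x - c‖ ‖x + v - c‖ :=
        mul_le_mul_of_nonneg_left (le_max_right _ _) ht.1
      have a3 : max ‖x - c‖ ‖x + v - c‖ < R - ρ := max_lt (by linarith) (by linarith)
      linarith
    have hφc : HasCompactSupport φ :=
      (isCompact_closedBall _ ρ).of_isClosed_subset (isClosed_tsupport φ) hts
    have h := hkin ξ hξ v hv φ hφ hφc ((hts.trans hcv).trans hB)
    have hgrad : ∀ z, ⟪v, gradient φ z⟫ = fderiv ℝ ψ (z - t • v) v := by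
      intro z
      rw [real_inner_comm, gradient, InnerProductSpace.toDual_symm_apply]
      have : HasFDerivAt φ (fderiv ℝ ψ (z - t • v)) z := by
        have h2 : HasFDerivAt (fun z : EuclideanSpace ℝ (Fin N) => z - t • v)
          (ContinuousLinearMap.id ℝ _) z := (hasFDerivAt_id z).sub_const _
        have h3 := (hdiff (z - t • v)).hasFDerivAt.comp z h2
        rw [ContinuousLinearMap.comp_id] at h3
        exact h3
      rw [this.fderiv]
    have hout : ∀ z ∈ Ω \ ball c R, chi u z ξ * ⟪v, gradient φ z⟫ = 0 := by
      intro z hz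
      have : z ∉ tsupport φ := fun h => hz.2 (hcv (hts h))
      have h3 : fderiv ℝ φ z = 0 := by
        by_contra h4
        exact this (tsupport_fderiv_subset ℝ (f := φ) (subset_tsupport _ h4))
      simp [gradient, h3]
    rw [setIntegral_eq_of_subset_of_forall_sdiff_eq_zero hΩ.measurableSet hB hout] at h
    simp only [hgrad] at h
    simp only [mul_neg, integral_neg, h, neg_zero]
  have hconst := constant_of_has_deriv_right_zero (a := (0 : ℝ)) (b := 1)
    (f := fun t : ℝ => ∫ z in ball c R, chi u z ξ * ψ (z - t • v))
    (fun t _ => (hder t).continuousAt.continuousWithinAt)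
    (fun t ht => by
      have := (hder t).hasDerivWithinAt (s := Ici t)
      rwa [hzero t ⟨ht.1, ht.2.le⟩] at this) 1 (by simp)
  simpa using hconst.symm

theorem meas_le {N : ℕ} {Ω : Set (EuclideanSpace ℝ (Fin N))} (hΩ : IsOpen Ω)
    {u : EuclideanSpace ℝ (Fin N) → EuclideanSpace ℝ (Fin N)} (hu : Measurable u)
    (hkin : KineticFormulation Ω u) {c x y ξ : EuclideanSpace ℝ (Fin N)} {R r : ℝ}
    (hB : ball c R ⊆ Ω) (hξ : ‖ξ‖ = 1) (hv : ⟪y - x, ξ⟫ = 0) (hr : 0 < r)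
    (h0 : dist x c + 2 * r < R) (h1 : dist y c + 2 * r < R) :
    volume ({z | 0 < ⟪u z, ξ⟫} ∩ closedBall x r) ≤
      volume ({z | 0 < ⟪u z, ξ⟫} ∩ closedBall y (2 * r)) := by
  let ψ : ContDiffBump x := ⟨r, 2 * r, hr, by linarith⟩
  have hA : MeasurableSet {z | 0 < ⟪u z, ξ⟫} :=
    measurableSet_lt measurable_const (hu.inner measurable_const)
  have hT := transport hΩ hu hkin (x := x) (v := y - x) (ρ := 2 * r) hB hξ hv h0
    (by simpa using h1) ψ ψ.contDiff ψ.tsupport_eq.le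
  have hfin : IsFiniteMeasure (volume.restrict (ball c R)) :=
    ⟨by rw [Measure.restrict_apply_univ]; exact measure_ball_lt_top⟩
  have hcm := chi_measurable hu ξ
  have hψ1 : ∀ z, ‖ψ z‖ ≤ 1 := fun z => by
    rw [Real.norm_of_nonneg ψ.nonneg]; exact ψ.le_one
  have hint : ∀ w, Integrable (fun z => chi u z ξ * ψ (z - w)) (volume.restrict (ball c R)) := by
    intro w
    have hcc : Continuous fun z => ψ (z - w) := ψ.continuous.comp (by fun_prop)
    refine Integrable.of_bound (C := 1) (hcm.mul hcc.measurable).aestronglyMeasurable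
      (Eventually.of_forall fun z => ?_)
    rw [norm_mul]
    exact (mul_le_of_le_one_left (norm_nonneg _) (chi_norm_le _ _ _)).trans (hψ1 _)
  have hS : ∀ w (s : ℝ), dist w c + s < R →
      ∫ z in ball c R, ({z | 0 < ⟪u z, ξ⟫} ∩ closedBall w s).indicator (fun _ => (1 : ℝ)) z =
      (volume ({z | 0 < ⟪u z, ξ⟫} ∩ closedBall w s)).toReal := by
    intro w s hs
    have hm := hA.inter (measurableSet_closedBall (x := w) (ε := s))
    rw [integral_indicator_const _ hm]
    simp only [measureReal_def, smul_eq_mul, mul_one]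
    rw [Measure.restrict_apply hm, inter_eq_left.2]
    exact inter_subset_right.trans (closedBall_subset_ball' (by linarith))
  have hI : ∀ w (s : ℝ), Integrable (({z | 0 < ⟪u z, ξ⟫} ∩ closedBall w s).indicator (fun _ => (1 : ℝ)))
      (volume.restrict (ball c R)) := fun w s =>
    (integrable_const (1 : ℝ)).indicator (hA.inter measurableSet_closedBall)
  have hle1 : (volume ({z | 0 < ⟪u z, ξ⟫} ∩ closedBall x r)).toReal ≤
      ∫ z in ball c R, chi u z ξ * ψ z := by
    rw [← hS x r (by linarith)]
    refine integral_mono (hI _ _) (by simpa using hint 0) fun z => ?_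
    by_cases hz : z ∈ {z | 0 < ⟪u z, ξ⟫} ∩ closedBall x r
    · rw [indicator_of_mem hz]
      have h3 : ψ z = 1 := ψ.one_of_mem_closedBall hz.2
      have h4 : 0 < ⟪u z, ξ⟫ := hz.1
      simp [chi, h3, h4]
    · rw [indicator_of_notMem hz]
      refine mul_nonneg ?_ ψ.nonneg
      unfold chi; split_ifs <;> simp
  have hle2 : ∫ z in ball c R, chi u z ξ * ψ (z - (y - x)) ≤
      (volume ({z | 0 < ⟪u z, ξ⟫} ∩ closedBall y (2 * r))).toReal := by
    rw [← hS y (2 * r) (by linarith)]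
    refine integral_mono (hint _) (hI _ _) fun z => ?_
    by_cases hz : z ∈ {z | 0 < ⟪u z, ξ⟫} ∩ closedBall y (2 * r)
    · rw [indicator_of_mem hz]
      have h5 : ψ (z - (y - x)) ≤ 1 := ψ.le_one
      have h6 : 0 ≤ ψ (z - (y - x)) := ψ.nonneg
      simp only [chi]; split_ifs <;> simp [h5]
    · rw [indicator_of_notMem hz]
      by_cases h7 : 0 < ⟪u z, ξ⟫
      · have h8 : ψ (z - (y - x)) = 0 := by
          apply ψ.zero_of_le_dist
          have : ¬ dist z y ≤ 2 * r := fun h => hz ⟨h7, h⟩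
          rw [dist_eq_norm] at this ⊢
          rw [show z - (y - x) - x = z - y by abel]
          exact (not_le.1 this).le
        simp [h8]
      · simp [chi, h7]
  have htop : ∀ w (s : ℝ), volume ({z | 0 < ⟪u z, ξ⟫} ∩ closedBall w s) ≠ ∞ := fun w s =>
    measure_ne_top_of_subset inter_subset_right measure_closedBall_lt_top.ne
  exact (ENNReal.toReal_le_toReal (htop _ _) (htop _ _)).1 (hle1.trans (hT.le.trans hle2))

/-- Points of approximate continuity. -/
def GoodPt {N : ℕ} (u : EuclideanSpace ℝ (Fin N) → EuclideanSpace ℝ (Fin N))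
    (x : EuclideanSpace ℝ (Fin N)) : Prop :=
  ∀ D ∈ TopologicalSpace.countableBasis (EuclideanSpace ℝ (Fin N)),
    Tendsto (fun r => volume (u ⁻¹' D ∩ closedBall x r) / volume (closedBall x r)) (𝓝[>] 0)
        (𝓝 ((u ⁻¹' D).indicator 1 x)) ∧
    Tendsto (fun r => volume ((u ⁻¹' D)ᶜ ∩ closedBall x r) / volume (closedBall x r)) (𝓝[>] 0)
        (𝓝 ((u ⁻¹' D)ᶜ.indicator 1 x))

theorem ae_goodPt {N : ℕ} {u : EuclideanSpace ℝ (Fin N) → EuclideanSpace ℝ (Fin N)}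
    (hu : Measurable u) : ∀ᵐ x, GoodPt u x := by
  unfold GoodPt
  rw [ae_ball_iff (TopologicalSpace.countable_countableBasis _)]
  intro D hD
  have hm : MeasurableSet (u ⁻¹' D) :=
    hu (TopologicalSpace.isOpen_of_mem_countableBasis hD).measurableSet
  filter_upwards [Besicovitch.ae_tendsto_measure_inter_div_of_measurableSet volume hm,
    Besicovitch.ae_tendsto_measure_inter_div_of_measurableSet volume hm.compl] with x h1 h2
  exact ⟨h1, h2⟩

theorem pair_cond {N : ℕ} {Ω : Set (EuclideanSpace ℝ (Fin N))} (hΩ : IsOpen Ω)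
    {u : EuclideanSpace ℝ (Fin N) → EuclideanSpace ℝ (Fin N)} (hu : Measurable u)
    (hkin : KineticFormulation Ω u) {c x y : EuclideanSpace ℝ (Fin N)} {R : ℝ}
    (hB : ball c R ⊆ Ω) (hx : x ∈ ball c R) (hy : y ∈ ball c R)
    (gx : GoodPt u x) (gy : GoodPt u y) (ξ : EuclideanSpace ℝ (Fin N))
    (hξ : ⟪y - x, ξ⟫ = 0) (h1 : 0 < ⟪u x, ξ⟫) (h2 : ⟪u y, ξ⟫ < 0) : False := by
  -- normalize
  wlog hn : ‖ξ‖ = 1 generalizing ξ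
  · have hξ0 : ξ ≠ 0 := by rintro rfl; simp at h1
    have hpos : 0 < ‖ξ‖⁻¹ := inv_pos.2 (norm_pos_iff.2 hξ0)
    refine this (‖ξ‖⁻¹ • ξ) ?_ ?_ ?_ ?_
    · rw [real_inner_smul_right, hξ, mul_zero]
    · rw [real_inner_smul_right]; exact mul_pos hpos h1
    · rw [real_inner_smul_right]; exact mul_neg_of_pos_of_neg hpos h2
    · rw [norm_smul, norm_inv, norm_norm, inv_mul_cancel₀ (norm_ne_zero_iff.2 hξ0)]
  have hb := TopologicalSpace.isBasis_countableBasis (EuclideanSpace ℝ (Fin N))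
  have o1 : IsOpen {w : EuclideanSpace ℝ (Fin N) | 0 < ⟪w, ξ⟫} :=
    isOpen_lt continuous_const (by fun_prop)
  have o2 : IsOpen {w : EuclideanSpace ℝ (Fin N) | ⟪w, ξ⟫ < 0} :=
    isOpen_lt (by fun_prop) continuous_const
  obtain ⟨D1, hD1, hxD, hs1⟩ := hb.exists_subset_of_mem_open (a := u x) h1 o1
  obtain ⟨D2, hD2, hyD, hs2⟩ := hb.exists_subset_of_mem_open (a := u y) h2 o2
  have t1 := (gx D1 hD1).1
  have t2 := (gy D2 hD2).2
  rw [indicator_of_mem (show x ∈ u ⁻¹' D1 from hxD)] at t1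
  rw [indicator_of_notMem (show y ∉ (u ⁻¹' D2)ᶜ from fun h => h hyD)] at t2
  have hdbl : Tendsto (fun r : ℝ => 2 * r) (𝓝[>] 0) (𝓝[>] 0) := by
    refine tendsto_nhdsWithin_iff.2 ⟨?_, ?_⟩
    · have : Tendsto (fun r : ℝ => 2 * r) (𝓝 0) (𝓝 (2 * 0)) := (continuous_const_mul 2).tendsto 0
      rw [mul_zero] at this
      exact this.mono_left nhdsWithin_le_nhds
    · filter_upwards [self_mem_nhdsWithin] with r hr
      simpa using hr
  have t3 := ENNReal.Tendsto.const_mul (a := ENNReal.ofReal (2 ^ N)) (t2.comp hdbl)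
    (Or.inr ENNReal.ofReal_ne_top)
  rw [mul_zero] at t3
  have hle : (1 : ℝ≥0∞) ≤ 0 := by
    refine le_of_tendsto_of_tendsto t1 t3 ?_
    have hx' : 0 < (R - dist x c) / 2 := by rw [mem_ball] at hx; linarith
    have hy' : 0 < (R - dist y c) / 2 := by rw [mem_ball] at hy; linarith
    filter_upwards [self_mem_nhdsWithin, mem_nhdsWithin_of_mem_nhds (Iio_mem_nhds hx'),
      mem_nhdsWithin_of_mem_nhds (Iio_mem_nhds hy')] with r hr hrx hry
    have hr : 0 < r := hr
    have hrx : r < (R - dist x c) / 2 := hrx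
    have hry : r < (R - dist y c) / 2 := hry
    have hm := meas_le hΩ hu hkin (x := x) (y := y) hB hn hξ hr (by linarith) (by linarith)
    have hv : volume (closedBall y (2 * r)) = ENNReal.ofReal (2 ^ N) * volume (closedBall x r) := by
      rw [Measure.addHaar_closedBall_mul _ _ (by norm_num) hr.le, finrank_euclideanSpace_fin,
        Measure.addHaar_closedBall_center volume x r]
    have hp : ENNReal.ofReal ((2 : ℝ) ^ N) ≠ 0 := by
      rw [Ne, ENNReal.ofReal_eq_zero, not_le]; positivity
    simp only [Function.comp]
    rw [hv, ← mul_div_assoc, ENNReal.mul_div_mul_left _ _ hp ENNReal.ofReal_ne_top]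
    refine ENNReal.div_le_div_right ?_ _
    refine (measure_mono ?_).trans (hm.trans (measure_mono ?_))
    · exact inter_subset_inter_left _ fun z hz => hs1 hz
    · refine inter_subset_inter_left _ fun z hz hz' => ?_
      have a1 : 0 < ⟪u z, ξ⟫ := hz
      have a2 : ⟪u z, ξ⟫ < 0 := hs2 hz'
      linarith
  simp at hle

theorem kinetic_characterizes_vortex (N : ℕ) (hN : 3 ≤ N)
    (Ω : Set (EuclideanSpace ℝ (Fin N))) (hΩ : IsOpen Ω) (hconn : IsConnected Ω)
    (u : EuclideanSpace ℝ (Fin N) → EuclideanSpace ℝ (Fin N)) (hmeas : Measurable u)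
    (hunit : ∀ᵐ x ∂volume.restrict Ω, ‖u x‖ = 1)
    (hkin : KineticFormulation Ω u)
    (hnc : ¬ ∃ c : EuclideanSpace ℝ (Fin N), ∀ᵐ x ∂volume.restrict Ω, u x = c) :
    ∃ P : EuclideanSpace ℝ (Fin N), ∃ γ : ℝ, (γ = 1 ∨ γ = -1) ∧
      ∀ᵐ x ∂volume.restrict Ω, u x = γ • (‖x - P‖⁻¹ • (x - P)) := by
  -- local classification
  have hloc : ∀ c R, 0 < R → ball c R ⊆ Ω → ∃ f, Model f ∧ u =ᵐ[volume.restrict (ball c R)] f := by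
    intro c R hR hB
    refine local_class hN (W := ball c R) (measure_ball_pos volume c hR).ne' u
      {x | x ∈ ball c R ∧ ‖u x‖ = 1 ∧ GoodPt u x} ?_ (fun x hx => hx.2.1) ?_
    · filter_upwards [ae_restrict_mem measurableSet_ball, ae_restrict_of_ae_restrict_of_subset hB hunit,
        ae_restrict_of_ae (ae_goodPt hmeas)] with x h1 h2 h3
      exact ⟨h1, h2, h3⟩
    · intro x hx y hy ξ h1 h2 h3
      exact pair_cond hΩ hmeas hkin hB hx.1 hy.1 hx.2.2 hy.2.2 ξ h1 h2 h3
  obtain ⟨x0, hx0⟩ := hconn.nonempty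
  obtain ⟨R0, hR0, hB0⟩ := Metric.isOpen_iff.1 hΩ x0 hx0
  obtain ⟨f, hf, huf⟩ := hloc x0 R0 hR0 hB0
  let A : Set (EuclideanSpace ℝ (Fin N)) :=
    {x | ∃ r > 0, u =ᵐ[volume.restrict (ball x r)] f}
  have hAo : IsOpen A := by
    rw [Metric.isOpen_iff]
    rintro x ⟨r, hr, h⟩
    refine ⟨r, hr, fun y hy => ?_⟩
    obtain ⟨s, hs, hsub⟩ := Metric.isOpen_iff.1 isOpen_ball y hy
    exact ⟨s, hs, ae_restrict_of_ae_restrict_of_subset hsub h⟩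
  have hsubA : Ω ⊆ A := by
    refine hconn.isPreconnected.subset_of_closure_inter_subset hAo ⟨x0, hx0, R0, hR0, huf⟩ ?_
    rintro x ⟨hxA, hxΩ⟩
    obtain ⟨R, hR, hB⟩ := Metric.isOpen_iff.1 hΩ x hxΩ
    obtain ⟨g, hg, hug⟩ := hloc x R hR hB
    obtain ⟨y, hyB, r, hr, hy⟩ := mem_closure_iff.1 hxA (ball x R) isOpen_ball (mem_ball_self hR)
    have hW : volume (ball x R ∩ ball y r) ≠ 0 :=
      ((isOpen_ball.inter isOpen_ball).measure_pos volume ⟨y, hyB, mem_ball_self hr⟩).ne'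
    have e1 : u =ᵐ[volume.restrict (ball x R ∩ ball y r)] f :=
      ae_restrict_of_ae_restrict_of_subset inter_subset_right hy
    have e2 : u =ᵐ[volume.restrict (ball x R ∩ ball y r)] g :=
      ae_restrict_of_ae_restrict_of_subset inter_subset_left hug
    have hfg : f = g := model_unique hN hW hf hg (e1.symm.trans e2)
    exact ⟨R, hR, hfg ▸ hug⟩
  have hall : ∀ᵐ x ∂volume.restrict Ω, u x = f x := by
    rw [ae_restrict_iff' hΩ.measurableSet, ae_iff]
    refine measure_null_of_locally_null _ fun x hx => ?_
    have hxΩ : x ∈ Ω := by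
      by_contra h
      exact hx fun h' => (h h').elim
    obtain ⟨r, hr, h⟩ := hsubA hxΩ
    refine ⟨_, inter_mem_nhdsWithin _ (ball_mem_nhds x hr), ?_⟩
    have h' := (ae_restrict_iff' measurableSet_ball).1 h
    rw [ae_iff] at h'
    refine measure_mono_null ?_ h'
    rintro z ⟨hz, hzb⟩ hz'
    exact hz fun _ => hz' hzb
  rcases hf with ⟨c, rfl⟩ | ⟨P, γ, hγ, rfl⟩
  · exact (hnc ⟨c, hall⟩).elim
  · exact ⟨P, γ, hγ, hall⟩
end
end

section
/- Let N ≥ 4, Ω ⊆ ℝ^N an open set, and u : Ω → ℝ^N a Lebesgue measurable vector field with |u| = 1 a.e. satisfying: (i) the weakened kinetic formulation: for every ξ ∈ S^{N−1} with ξ_N = 0, every v ∈ ℝ^N with v·ξ = 0, and every φ ∈ C_c^∞(Ω), ∫_Ω χ(x, ξ)(v·∇φ(x)) dx = 0; and (ii) the distributional relations ∂_k u_N = ∂_N u_k for k = 1, …, N−1, i.e. ∫_Ω (u_N ∂_k φ − u_k ∂_N φ) dx = 0 for all φ ∈ C_c^∞(Ω). Then for every open ball B ⊆ Ω on which |u′(x)|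 > 0 for a.e. x (where u′ = (u₁, …, u_{N−1})), either there exists a constant vector w′ ∈ S^{N−2} ⊂ ℝ^{N−1} with u′(x)/|u′(x)| = w′ for a.e. x ∈ B, or there exist a point P′ ∈ ℝ^{N−1} and a sign γ ∈ {+1, −1} with u′(x)/|u′(x)| = γ (x′ − P′)/|x′ − P′| for a.e. x = (x′, x_N) ∈ B. -/
open MeasureTheory Metric Set Filter
open scoped RealInnerProductSpace ENNReal Topology

noncomputable section

/-- The projection of a vector of Euclidean N-space onto its first N-1 coordinates. -/
def proj' (N : ℕ) (x : EuclideanSpace ℝ (Fin N)) : EuclideanSpace ℝ (Fin (N - 1)) :=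
  (WithLp.equiv 2 (Fin (N - 1) → ℝ)).symm (fun i => x (Fin.castLE (Nat.sub_le N 1) i))


open ContinuousLinearMap Convolution in
/-- Mollifications are constant along directions in which the distributional derivative vanishes. -/
lemma conv_const {E : Type*} [NormedAddCommGroup E] [InnerProductSpace ℝ E]
    [FiniteDimensional ℝ E] [MeasurableSpace E] [BorelSpace E] (μ : Measure E) [μ.IsAddHaarMeasure]
    (B : Set E) (hB : Convex ℝ B) (g : E → ℝ) (hg : LocallyIntegrable g μ) (x y : E)
    (h : ∀ φ : E → ℝ, ContDiff ℝ (⊤ : ℕ∞) φ → HasCompactSupport φ →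
        tsupport φ ⊆ B → ∫ z, g z * fderiv ℝ φ z (x - y) ∂μ = 0)
    (f : ContDiffBump (0 : E)) (hx : closedBall x f.rOut ⊆ B) (hy : closedBall y f.rOut ⊆ B) :
    (f.normed μ ⋆[lsmul ℝ ℝ, μ] g) x = (f.normed μ ⋆[lsmul ℝ ℝ, μ] g) y := by
  set ψ := f.normed μ with hψ
  have hψs : ContDiff ℝ (⊤ : ℕ∞) ψ := f.contDiff_normed
  have hψ1 : ContDiff ℝ 1 ψ := f.contDiff_normed (n := 1)
  have hψc : HasCompactSupport ψ := f.hasCompactSupport_normed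
  set γ : ℝ → E := fun t => y + t • (x - y) with hγ
  have hγd : ∀ t, HasDerivAt γ (x - y) t := by
    intro t
    have := ((hasDerivAt_id t).smul_const (x - y)).const_add y
    rw [one_smul] at this
    exact this
  have hball : ∀ t ∈ Icc (0:ℝ) 1, closedBall (γ t) f.rOut ⊆ B := by
    intro t ht z hz
    have hw : ‖z - γ t‖ ≤ f.rOut := by simpa [dist_eq_norm] using hz
    have h1 : y + (z - γ t) ∈ B := hy (by simpa [dist_eq_norm] using hw)
    have h2 : x + (z - γ t) ∈ B := hx (by simpa [dist_eq_norm] using hw)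
    have := hB h1 h2 (by linarith [ht.2] : 0 ≤ 1 - t) ht.1 (by ring)
    convert this using 1
    simp only [hγ]
    module
  have hd : ∀ t ∈ Icc (0:ℝ) 1, HasDerivAt (fun t => (ψ ⋆[lsmul ℝ ℝ, μ] g) (γ t)) 0 t := by
    intro t ht
    have h1 := hψc.hasFDerivAt_convolution_left (lsmul ℝ ℝ) (μ := μ) hψ1 hg (γ t)
    have h2 := h1.comp_hasDerivAt t (hγd t)
    refine HasDerivAt.congr_deriv h2 ?_
    have hex : ConvolutionExistsAt (fderiv ℝ ψ) g (γ t) ((lsmul ℝ ℝ).precompL E) μ :=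
      (hψc.fderiv ℝ).convolutionExists_left _ (hψ1.continuous_fderiv one_ne_zero) hg _
    rw [convolution_eq_swap]
    rw [ContinuousLinearMap.integral_apply (by
      exact (convolutionExistsAt_iff_integrable_swap.1 hex))]
    set φ : E → ℝ := fun z => ψ (γ t - z) with hφ
    have hts : tsupport φ ⊆ closedBall (γ t) f.rOut := by
      apply closure_minimal _ isClosed_closedBall
      intro z hz
      have : γ t - z ∈ Function.support ψ := hz
      rw [hψ, f.support_normed_eq] at this
      rw [mem_ball_zero_iff] at this
      rw [mem_closedBall, dist_eq_norm, ← norm_neg]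
      simpa using this.le
    have := h φ (hψs.comp (contDiff_const.sub contDiff_id))
      (HasCompactSupport.of_support_subset_isCompact (isCompact_closedBall (γ t) f.rOut)
        (subset_closure.trans hts)) (hts.trans (hball t ht))
    have hfd : ∀ z, fderiv ℝ φ z (x - y) = - fderiv ℝ ψ (γ t - z) (x - y) := by
      intro z
      have hh : HasFDerivAt φ _ z :=
        ((hψ1.differentiable one_ne_zero (γ t - z)).hasFDerivAt).comp z
          ((hasFDerivAt_id z).const_sub (γ t))
      rw [hh.fderiv]; simp
    simp only [hfd] at this
    simp only [precompL_apply, lsmul_apply, smul_eq_mul]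
    rw [← neg_eq_zero, ← integral_neg] at this
    rw [← this]
    congr 1; ext z; ring
  have := constant_of_has_deriv_right_zero (a := 0) (b := 1)
    (fun t ht => (hd t ht).continuousAt.continuousWithinAt)
    (fun t ht => (hd t ⟨ht.1, ht.2.le⟩).hasDerivWithinAt) 1 (by simp)
  simpa [hγ] using this

open ContinuousLinearMap Convolution in
lemma good_set {E H : Type*} [NormedAddCommGroup E] [InnerProductSpace ℝ E]
    [FiniteDimensional ℝ E] [MeasurableSpace E] [BorelSpace E] (μ : Measure E) [μ.IsAddHaarMeasure]
    [NormedAddCommGroup H] [InnerProductSpace ℝ H] [FiniteDimensional ℝ H]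
    [MeasurableSpace H] [BorelSpace H]
    (B : Set E) (hB : Convex ℝ B) (hBo : IsOpen B) (W : E → H) (hW : Measurable W)
    (p : E →ₗ[ℝ] H)
    (h : ∀ ξ : H, ξ ≠ 0 → ∀ v : E, ⟪p v, ξ⟫ = 0 →
      ∀ φ : E → ℝ, ContDiff ℝ (⊤ : ℕ∞) φ → HasCompactSupport φ →
        tsupport φ ⊆ B → ∫ z, ({z | 0 < ⟪W z, ξ⟫}.indicator 1 z) * fderiv ℝ φ z v ∂μ = 0) :
    ∃ G : Set E, (∀ᵐ x ∂μ.restrict B, x ∈ G) ∧ ∀ x ∈ G, ∀ y ∈ G, ∀ ξ : H,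
      ⟪p x - p y, ξ⟫ = 0 → 0 < ⟪W x, ξ⟫ → ⟪W y, ξ⟫ < 0 → False := by
  have hli : ∀ A : Set E, MeasurableSet A → LocallyIntegrable (A.indicator (1 : E → ℝ)) μ := by
    intro A hA
    exact (locallyIntegrable_const (1:ℝ)).indicator hA
  let f : ℕ → ContDiffBump (0 : E) := fun n =>
    ⟨1 / ((n:ℝ) + 1), 2 * (1 / ((n:ℝ) + 1)), by positivity, by
      have : 0 < 1 / ((n:ℝ) + 1) := by positivity
      linarith⟩
  have hf0 : Tendsto (fun n => (f n).rOut) atTop (𝓝 0) := by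
    have := (tendsto_one_div_add_atTop_nhds_zero_nat (𝕜 := ℝ)).const_mul 2
    rw [mul_zero] at this
    exact this
  have hfK : ∀ᶠ n in atTop, (f n).rOut ≤ 2 * (f n).rIn := Eventually.of_forall fun n => le_rfl
  have hae : ∀ A : Set E, MeasurableSet A → ∀ᵐ x ∂μ,
      Tendsto (fun n => ((f n).normed μ ⋆[lsmul ℝ ℝ, μ] (A.indicator (1 : E → ℝ))) x) atTop
        (𝓝 (A.indicator (1 : E → ℝ) x)) := fun A hA =>
    ContDiffBump.ae_convolution_tendsto_right_of_locallyIntegrable hf0 hfK (hli A hA)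
  have hmU : ∀ U ∈ TopologicalSpace.countableBasis H, MeasurableSet (W ⁻¹' U) := fun U hU =>
    hW (TopologicalSpace.isOpen_of_mem_countableBasis hU).measurableSet
  let P : E → Prop := fun x => ∀ U ∈ TopologicalSpace.countableBasis H,
      Tendsto (fun n => ((f n).normed μ ⋆[lsmul ℝ ℝ, μ] ((W ⁻¹' U).indicator (1 : E → ℝ))) x) atTop
        (𝓝 ((W ⁻¹' U).indicator (1 : E → ℝ) x)) ∧
      Tendsto (fun n => ((f n).normed μ ⋆[lsmul ℝ ℝ, μ] ((W ⁻¹' U)ᶜ.indicator (1 : E → ℝ))) x) atTop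
        (𝓝 ((W ⁻¹' U)ᶜ.indicator (1 : E → ℝ) x))
  have hP : ∀ᵐ x ∂μ, P x := by
    refine (ae_ball_iff (TopologicalSpace.countable_countableBasis H)).2 fun U hU => ?_
    exact (hae _ (hmU U hU)).and (hae _ (hmU U hU).compl)
  refine ⟨{x | P x ∧ x ∈ B}, ?_, ?_⟩
  · filter_upwards [ae_restrict_of_ae hP, ae_restrict_mem hBo.measurableSet] with x h1 h2
    exact ⟨h1, h2⟩
  rintro x ⟨hPx, hxB⟩ y ⟨hPy, hyB⟩ ξ hξ hx hy
  have hξ0 : ξ ≠ 0 := by rintro rfl; simp at hx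
  have hcont : Continuous fun w : H => ⟪w, ξ⟫ := by fun_prop
  obtain ⟨U, hU, hxU, hUs⟩ := (TopologicalSpace.isBasis_countableBasis H).exists_subset_of_mem_open
    (show W x ∈ {w : H | 0 < ⟪w, ξ⟫} from hx) (isOpen_lt continuous_const hcont)
  obtain ⟨V, hV, hyV, hVs⟩ := (TopologicalSpace.isBasis_countableBasis H).exists_subset_of_mem_open
    (show W y ∈ {w : H | ⟪w, ξ⟫ < 0} from hy) (isOpen_lt hcont continuous_const)
  set A : Set E := {z | 0 < ⟪W z, ξ⟫} with hA
  have hAm : MeasurableSet A := measurableSet_lt measurable_const (hcont.measurable.comp hW)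
  have hx1 := (hPx U hU).1
  have hy1 := (hPy V hV).2
  rw [indicator_of_mem (show x ∈ W ⁻¹' U from hxU)] at hx1
  rw [indicator_of_notMem (show y ∉ (W ⁻¹' V)ᶜ from fun h => h hyV)] at hy1
  have hex : ∀ n (S : Set E), MeasurableSet S → ConvolutionExists ((f n).normed μ)
      (S.indicator (1 : E → ℝ)) (lsmul ℝ ℝ) μ := fun n S hS =>
    (f n).hasCompactSupport_normed.convolutionExists_left _ (f n).continuous_normed (hli S hS)
  have hmono : ∀ n (S T : Set E), MeasurableSet S → MeasurableSet T → S ⊆ T → ∀ q,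
      ((f n).normed μ ⋆[lsmul ℝ ℝ, μ] (S.indicator (1 : E → ℝ))) q ≤
      ((f n).normed μ ⋆[lsmul ℝ ℝ, μ] (T.indicator (1 : E → ℝ))) q := by
    intro n S T hS hT hST q
    apply convolution_mono_right (hex n S hS q) (hex n T hT q) (f n).nonneg_normed
    intro z
    exact indicator_le_indicator_of_subset hST (fun _ => zero_le_one) z
  have e1 : ∀ᶠ n in atTop, (1:ℝ)/2 < ((f n).normed μ ⋆[lsmul ℝ ℝ, μ] (A.indicator (1 : E → ℝ))) x := by
    filter_upwards [hx1.eventually (lt_mem_nhds (show (1:ℝ)/2 < (1 : E → ℝ) x by norm_num))] with n hn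
    exact hn.trans_le (hmono n _ _ (hmU U hU) hAm (fun z hz => hUs hz) x)
  have e2 : ∀ᶠ n in atTop, ((f n).normed μ ⋆[lsmul ℝ ℝ, μ] (A.indicator (1 : E → ℝ))) y < (1:ℝ)/2 := by
    filter_upwards [hy1.eventually (gt_mem_nhds (show (0:ℝ) < (1:ℝ)/2 by norm_num))] with n hn
    refine (hmono n _ _ hAm (hmU V hV).compl ?_ y).trans_lt hn
    intro z hz hzV
    have h1 : ⟪W z, ξ⟫ < 0 := hVs hzV
    have h2 : 0 < ⟪W z, ξ⟫ := hz
    exact lt_asymm h1 h2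
  have e3 : ∀ q ∈ B, ∀ᶠ n in atTop, closedBall q (f n).rOut ⊆ B := by
    intro q hq
    obtain ⟨ε, hε, hεB⟩ := Metric.isOpen_iff.1 hBo q hq
    filter_upwards [hf0.eventually (gt_mem_nhds hε)] with n hn
    exact (closedBall_subset_ball hn).trans hεB
  obtain ⟨n, h1, h2, h3, h4⟩ := (e1.and (e2.and ((e3 x hxB).and (e3 y hyB)))).exists
  have := conv_const μ B hB _ (hli A hAm) x y
    (h ξ hξ0 (x - y) (by rwa [map_sub])) (f n) h3 h4
  linarith

lemma dep_of_no_sep {H : Type*} [NormedAddCommGroup H] [InnerProductSpace ℝ H] (X Y d : H)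
    (h : ∀ ξ : H, ⟪d, ξ⟫ = 0 → 0 < ⟪X, ξ⟫ → ⟪Y, ξ⟫ < 0 → False) :
    ∃ a b c : ℝ, 0 ≤ a ∧ 0 ≤ b ∧ (a ≠ 0 ∨ b ≠ 0) ∧ a • X - b • Y = c • d := by
  have key : ∀ Z : H, ∃ c : ℝ, ⟪d, Z - c • d⟫ = 0 := by
    intro Z
    refine ⟨⟪d, Z⟫ / ⟪d, d⟫, ?_⟩
    rw [inner_sub_right, inner_smul_right]
    by_cases hd : d = 0
    · simp [hd]
    · have : ⟪d, d⟫ ≠ 0 := inner_self_ne_zero.2 hd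
      field_simp
      simp
  obtain ⟨c1, h1⟩ := key X
  obtain ⟨c2, h2⟩ := key Y
  obtain ⟨X', hX⟩ : ∃ X', X' = X - c1 • d := ⟨_, rfl⟩
  obtain ⟨Y', hY⟩ : ∃ Y', Y' = Y - c2 • d := ⟨_, rfl⟩
  rw [← hX] at h1
  rw [← hY] at h2
  have hX2 : X = X' + c1 • d := by rw [hX]; module
  have hY2 : Y = Y' + c2 • d := by rw [hY]; module
  by_cases hX0 : X' = 0
  · exact ⟨1, 0, c1, zero_le_one, le_rfl, Or.inl one_ne_zero, by rw [hX2, hX0]; module⟩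
  by_cases hY0 : Y' = 0
  · exact ⟨0, 1, -c2, le_rfl, zero_le_one, Or.inr one_ne_zero, by rw [hY2, hY0]; module⟩
  have hXn : 0 < ‖X'‖ := norm_pos_iff.2 hX0
  have hYn : 0 < ‖Y'‖ := norm_pos_iff.2 hY0
  have hle := real_inner_le_norm X' Y'
  have heq : ⟪X', Y'⟫ = ‖X'‖ * ‖Y'‖ := by
    by_contra hne
    have hlt : ⟪X', Y'⟫ < ‖X'‖ * ‖Y'‖ := lt_of_le_of_ne hle hne
    have hd : ⟪d, ‖Y'‖ • X' - ‖X'‖ • Y'⟫ = 0 := by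
      rw [inner_sub_right, inner_smul_right, inner_smul_right, h1, h2]; ring
    apply h (‖Y'‖ • X' - ‖X'‖ • Y') hd
    · rw [hX2, inner_add_left, inner_smul_left, hd, inner_sub_right, inner_smul_right,
        inner_smul_right, real_inner_self_eq_norm_sq]
      simp only [mul_zero, add_zero]
      nlinarith [mul_pos hXn (sub_pos.2 hlt)]
    · rw [hY2, inner_add_left, inner_smul_left, hd, inner_sub_right, inner_smul_right,
        inner_smul_right, real_inner_self_eq_norm_sq, real_inner_comm]
      simp only [mul_zero, add_zero]
      nlinarith [mul_pos hYn (sub_pos.2 hlt)]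
  rw [inner_eq_norm_mul_iff_real] at heq
  refine ⟨‖Y'‖, ‖X'‖, ‖Y'‖ * c1 - ‖X'‖ * c2, hYn.le, hXn.le, Or.inl hYn.ne', ?_⟩
  calc ‖Y'‖ • X - ‖X'‖ • Y = ‖Y'‖ • (X' + c1 • d) - ‖X'‖ • (Y' + c2 • d) := by rw [← hX2, ← hY2]
    _ = (‖Y'‖ • X' - ‖X'‖ • Y') + (‖Y'‖ * c1 - ‖X'‖ * c2) • d := by module
    _ = _ := by rw [heq]; simp

lemma ae_notMem {E H : Type*} [NormedAddCommGroup E] [NormedSpace ℝ E]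
    [FiniteDimensional ℝ E] [MeasurableSpace E] [BorelSpace E] (μ : Measure E) [μ.IsAddHaarMeasure]
    [NormedAddCommGroup H] [NormedSpace ℝ H]
    (p : E →ₗ[ℝ] H) (hp : Function.Surjective p) (S : Submodule ℝ H) (hS : S ≠ ⊤) (x₀ : E) :
    ∀ᵐ x ∂μ, p x - p x₀ ∉ S := by
  have h1 : S.comap p ≠ ⊤ := by
    intro h
    apply hS
    rw [eq_top_iff]
    intro z _
    obtain ⟨x, rfl⟩ := hp z
    have : x ∈ S.comap p := by rw [h]; trivial
    exact this
  have h2 := Measure.addHaar_submodule μ (S.comap p) h1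
  have h3 := measure_preimage_add_right μ (-x₀) (S.comap p : Set E)
  rw [h2] at h3
  rw [ae_iff]
  convert h3 using 2
  ext x
  simp [sub_eq_add_neg]

lemma span_pair_ne_top {H : Type*} [NormedAddCommGroup H] [NormedSpace ℝ H]
    (hd : 3 ≤ Module.finrank ℝ H) (a b : H) : Submodule.span ℝ ({a, b} : Set H) ≠ ⊤ := by
  classical
  intro h
  have h1 := finrank_span_finset_le_card (R := ℝ) ({a, b} : Finset H)
  rw [Set.finrank] at h1
  rw [show ((({a, b} : Finset H)) : Set H) = {a, b} by simp, h, finrank_top] at h1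
  have := Finset.card_le_two (a := a) (b := b)
  omega

lemma span_sing_ne_top {H : Type*} [NormedAddCommGroup H] [NormedSpace ℝ H]
    (hd : 3 ≤ Module.finrank ℝ H) (a : H) : Submodule.span ℝ ({a} : Set H) ≠ ⊤ := by
  have := span_pair_ne_top hd a a
  simpa using this

lemma geo {E H : Type*} [NormedAddCommGroup E] [NormedSpace ℝ E]
    [FiniteDimensional ℝ E] [MeasurableSpace E] [BorelSpace E] (μ : Measure E) [μ.IsAddHaarMeasure]
    [NormedAddCommGroup H] [NormedSpace ℝ H] (hd : 3 ≤ Module.finrank ℝ H)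
    (p : E →ₗ[ℝ] H) (hp : Function.Surjective p) (B : Set E) (W : E → H) (G : Set E)
    (hG : ∀ᵐ x ∂μ.restrict B, x ∈ G) (hB : (ae (μ.restrict B)).NeBot)
    (hW : ∀ x ∈ G, W x ≠ 0)
    (hdep : ∀ x ∈ G, ∀ y ∈ G, ∃ a b c : ℝ, 0 ≤ a ∧ 0 ≤ b ∧ (a ≠ 0 ∨ b ≠ 0) ∧
      a • W x - b • W y = c • (p x - p y)) :
    (∃ w : H, ‖w‖ = 1 ∧ ∀ᵐ x ∂μ.restrict B, ‖W x‖⁻¹ • W x = w) ∨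
    (∃ P : H, ∃ γ : ℝ, (γ = 1 ∨ γ = -1) ∧ ∀ᵐ x ∂μ.restrict B,
      ‖W x‖⁻¹ • W x = γ • (‖p x - P‖⁻¹ • (p x - P))) := by
  obtain ⟨x₀, hx₀⟩ := hG.exists
  have hW0 := hW x₀ hx₀
  by_cases hcase : ∀ x ∈ G, W x ∈ Submodule.span ℝ {W x₀}
  · left
    refine ⟨‖W x₀‖⁻¹ • W x₀, ?_, ?_⟩
    · rw [norm_smul, norm_inv, norm_norm, inv_mul_cancel₀ (norm_ne_zero_iff.2 hW0)]
    filter_upwards [hG, ae_restrict_of_ae (ae_notMem μ p hp _ (span_sing_ne_top hd (W x₀)) x₀)]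
      with x hx hxn
    obtain ⟨s, hs⟩ := Submodule.mem_span_singleton.1 (hcase x hx)
    obtain ⟨a, b, c, ha, hb, hab, he⟩ := hdep x hx x₀ hx₀
    have hWx := hW x hx
    rw [← hs] at he hWx ⊢
    have hs0 : s ≠ 0 := by rintro rfl; simp at hWx
    have hc : c = 0 := by
      by_contra hc
      apply hxn
      rw [Submodule.mem_span_singleton]
      refine ⟨c⁻¹ * (a * s - b), ?_⟩
      rw [mul_smul, show (a * s - b) • W x₀ = a • s • W x₀ - b • W x₀ by module, he, smul_smul,
        inv_mul_cancel₀ hc, one_smul]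
    rw [hc, zero_smul, show a • s • W x₀ - b • W x₀ = (a * s - b) • W x₀ by module,
      smul_eq_zero] at he
    have he : a * s - b = 0 := he.resolve_right hW0
    have ha0 : a ≠ 0 := by
      rintro rfl
      rcases hab with h | h
      · exact h rfl
      · apply h; linarith
    have hapos : 0 < a := lt_of_le_of_ne ha (Ne.symm ha0)
    have hspos : 0 < s := by
      rcases lt_or_gt_of_ne hs0 with h | h
      · nlinarith
      · exact h
    rw [norm_smul, Real.norm_of_nonneg hspos.le, smul_smul]
    congr 1
    have := norm_ne_zero_iff.2 hW0
    field_simp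
  · right
    push Not at hcase
    obtain ⟨x₁, hx₁, hn⟩ := hcase
    have hind : ∀ m0 m1 : ℝ, m1 • W x₁ = m0 • W x₀ → m1 = 0 := by
      intro m0 m1 h
      by_contra hm
      apply hn
      rw [Submodule.mem_span_singleton]
      exact ⟨m1⁻¹ * m0, by rw [mul_smul, ← h, smul_smul, inv_mul_cancel₀ hm, one_smul]⟩
    obtain ⟨P, α, β, hP0, hP1⟩ : ∃ P : H, ∃ α β : ℝ, p x₀ = P + α • W x₀ ∧ p x₁ = P + β • W x₁ := by
      obtain ⟨a, b, c, ha, hb, hab, he⟩ := hdep x₀ hx₀ x₁ hx₁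
      have hc : c ≠ 0 := by
        rintro rfl
        rw [zero_smul, sub_eq_zero] at he
        have hb0 := hind _ _ he.symm
        rw [hb0, zero_smul, smul_eq_zero] at he
        rcases hab with h | h
        · exact h (he.resolve_right hW0)
        · exact h hb0
      refine ⟨p x₀ - (c⁻¹ * a) • W x₀, c⁻¹ * a, c⁻¹ * b, by module, ?_⟩
      have : p x₀ - p x₁ = c⁻¹ • (a • W x₀ - b • W x₁) := by
        rw [he, smul_smul, inv_mul_cancel₀ hc, one_smul]
      rw [show p x₁ = p x₀ - (p x₀ - p x₁) by module, this]
      module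
    set S := Submodule.span ℝ ({W x₀, W x₁} : Set H) with hSdef
    have hS0 : W x₀ ∈ S := Submodule.subset_span (by simp)
    have hS1 : W x₁ ∈ S := Submodule.subset_span (by simp)
    have hone : ∀ x ∈ G, ∀ y ∈ G, ∀ t : ℝ, p y = P + t • W y → W y ∈ S → p x - P ∉ S →
        ∃ m k : ℝ, W x = m • W y + k • (p x - P) := by
      intro x hx y hy t ht hyS hxS
      obtain ⟨a, b, c, ha, hb, hab, he⟩ := hdep x hx y hy
      have hpp : p x - p y = (p x - P) - t • W y := by rw [ht]; module
      rw [hpp] at he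
      have ha0 : a ≠ 0 := by
        rintro rfl
        have he2 : c • (p x - P) = (c * t - b) • W y := by
          rw [show c • (p x - P) = c • ((p x - P) - t • W y) + (c * t) • W y by module, ← he]
          module
        have hc : c = 0 := by
          by_contra hc
          apply hxS
          have : p x - P = c⁻¹ • ((c * t - b) • W y) := by
            rw [← he2, smul_smul, inv_mul_cancel₀ hc, one_smul]
          rw [this]
          exact S.smul_mem _ (S.smul_mem _ hyS)
        rw [hc, zero_smul] at he2
        have := (smul_eq_zero.1 he2.symm).resolve_right (hW y hy)
        rcases hab with h | h
        · exact h rfl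
        · apply h; linarith
      refine ⟨a⁻¹ * (b - c * t), a⁻¹ * c, ?_⟩
      have : W x = a⁻¹ • ((a • W x - b • W y) + b • W y) := by
        rw [sub_add_cancel, smul_smul, inv_mul_cancel₀ ha0, one_smul]
      rw [this, he]
      module
    have hmain : ∀ᵐ x ∂μ.restrict B, x ∈ G ∧ ∃ s : ℝ, W x = s • (p x - P) := by
      filter_upwards [hG, ae_restrict_of_ae (ae_notMem μ p hp S (span_pair_ne_top hd _ _) x₀)]
        with x hx hxn
      have hxS : p x - P ∉ S := by
        intro h
        apply hxn
        rw [show p x - p x₀ = (p x - P) - α • W x₀ by rw [hP0]; module]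
        exact S.sub_mem h (S.smul_mem _ hS0)
      obtain ⟨m0, k0, e0⟩ := hone x hx x₀ hx₀ α hP0 hS0 hxS
      obtain ⟨m1, k1, e1⟩ := hone x hx x₁ hx₁ β hP1 hS1 hxS
      have e2 : (k0 - k1) • (p x - P) = m1 • W x₁ - m0 • W x₀ := by
        have : m1 • W x₁ + k1 • (p x - P) = m0 • W x₀ + k0 • (p x - P) := by rw [← e0, ← e1]
        rw [← sub_eq_zero] at this ⊢
        rw [← neg_eq_zero, ← this]
        module
      have hk : k0 - k1 = 0 := by
        by_contra hk
        apply hxS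
        have : p x - P = (k0 - k1)⁻¹ • (m1 • W x₁ - m0 • W x₀) := by
          rw [← e2, smul_smul, inv_mul_cancel₀ hk, one_smul]
        rw [this]
        exact S.smul_mem _ (S.sub_mem (S.smul_mem _ hS1) (S.smul_mem _ hS0))
      rw [hk, zero_smul] at e2
      have hm := hind _ _ (sub_eq_zero.1 e2.symm)
      refine ⟨hx, k1, ?_⟩
      rw [e1, hm]; simp
    obtain ⟨x₂, hx₂, s₂, hs₂⟩ := hmain.exists
    have hW2 := hW x₂ hx₂
    have hs₂0 : s₂ ≠ 0 := by rintro rfl; simp [hs₂] at hW2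
    have hD2 : p x₂ - P ≠ 0 := by intro h; rw [hs₂, h] at hW2; simp at hW2
    refine ⟨P, SignType.sign s₂, ?_, ?_⟩
    · rcases lt_or_gt_of_ne hs₂0 with h | h
      · right; simp [h]
      · left; simp [h]
    filter_upwards [hmain, ae_restrict_of_ae
      (ae_notMem μ p hp _ (span_sing_ne_top hd (p x₂ - P)) x₂)] with x ⟨hx, s, hs⟩ hxn
    have hWx := hW x hx
    have hs0 : s ≠ 0 := by rintro rfl; simp [hs] at hWx
    have hD : p x - P ≠ 0 := by intro h; rw [hs, h] at hWx; simp at hWx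
    obtain ⟨a, b, c, ha, hb, hab, he⟩ := hdep x hx x₂ hx₂
    rw [hs, hs₂] at he
    have e2 : (a * s - c) • (p x - P) = (b * s₂ - c) • (p x₂ - P) := by
      rw [← sub_eq_zero] at he ⊢
      rw [← he]
      module
    have e3 : a * s - c = 0 := by
      by_contra hk
      apply hxn
      have : p x - P = (a * s - c)⁻¹ • ((b * s₂ - c) • (p x₂ - P)) := by
        rw [← e2, smul_smul, inv_mul_cancel₀ hk, one_smul]
      rw [show p x - p x₂ = (p x - P) - (p x₂ - P) by module, this]
      have hm := Submodule.mem_span_singleton_self (R := ℝ) (p x₂ - P)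
      exact Submodule.sub_mem _ (Submodule.smul_mem _ _ (Submodule.smul_mem _ _ hm)) hm
    rw [e3, zero_smul] at e2
    have e4 := (smul_eq_zero.1 e2.symm).resolve_right hD2
    have e5 : a * s = b * s₂ := by linarith
    have ha0 : a ≠ 0 := by
      rintro rfl
      rw [zero_mul] at e5
      rcases hab with h | h
      · exact h rfl
      · exact h ((mul_eq_zero.1 e5.symm).resolve_right hs₂0)
    have hapos : 0 < a := lt_of_le_of_ne ha (Ne.symm ha0)
    have hDn := norm_ne_zero_iff.2 hD
    rw [hs, norm_smul, smul_smul, smul_smul, Real.norm_eq_abs]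
    congr 1
    rcases lt_or_gt_of_ne hs₂0 with h | h
    · have : s < 0 := by
        rcases lt_or_gt_of_ne hs0 with h' | h'
        · exact h'
        · nlinarith [mul_pos hapos h']
      rw [abs_of_neg this, sign_neg h]
      simp only [SignType.coe_neg, SignType.coe_one]
      field_simp
    · have : 0 < s := by
        rcases lt_or_gt_of_ne hs0 with h' | h'
        · nlinarith [mul_neg_of_pos_of_neg hapos h']
        · exact h'
      rw [abs_of_pos this, sign_pos h]
      simp only [SignType.coe_one]
      field_simp

/-- The projection onto the first coordinates as a linear map. -/
def projL (M : ℕ) : EuclideanSpace ℝ (Fin (M + 1)) →ₗ[ℝ] EuclideanSpace ℝ (Fin M) where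
  toFun x := proj' (M + 1) x
  map_add' x y := by ext i; simp [proj']
  map_smul' c x := by ext i; simp [proj']

lemma projL_surj (M : ℕ) : Function.Surjective (projL M) := by
  intro z
  refine ⟨WithLp.toLp 2 (Fin.snoc (α := fun _ => ℝ) (fun i => z i) 0), ?_⟩
  ext i
  exact Fin.snoc_castSucc (α := fun _ => ℝ) 0 (fun i => z i) i

/-- Extension of a vector by a vanishing last coordinate. -/
def liftV (M : ℕ) (z : EuclideanSpace ℝ (Fin M)) : EuclideanSpace ℝ (Fin (M + 1)) :=
  WithLp.toLp 2 (Fin.snoc (α := fun _ => ℝ) (fun i => z i) 0)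

lemma inner_liftV (M : ℕ) (x : EuclideanSpace ℝ (Fin (M + 1))) (z : EuclideanSpace ℝ (Fin M)) :
    ⟪x, liftV M z⟫ = ⟪projL M x, z⟫ := by
  rw [PiLp.inner_apply, PiLp.inner_apply, Fin.sum_univ_castSucc]
  have h1 : ∀ i : Fin M, liftV M z i.castSucc = z i := fun i =>
    Fin.snoc_castSucc (α := fun _ => ℝ) 0 (fun i => z i) i
  have h2 : liftV M z (Fin.last M) = 0 := Fin.snoc_last (α := fun _ => ℝ) 0 (fun i => z i)
  simp only [h1, h2, inner_zero_right, add_zero]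
  rfl

lemma liftV_last (M : ℕ) (z : EuclideanSpace ℝ (Fin M)) : liftV M z (Fin.last M) = 0 :=
  Fin.snoc_last (α := fun _ => ℝ) 0 (fun i => z i)

lemma projL_liftV (M : ℕ) (z : EuclideanSpace ℝ (Fin M)) : projL M (liftV M z) = z := by
  ext i
  exact Fin.snoc_castSucc (α := fun _ => ℝ) 0 (fun i => z i) i

lemma norm_liftV (M : ℕ) (z : EuclideanSpace ℝ (Fin M)) : ‖liftV M z‖ = ‖z‖ := by
  have h := inner_liftV M (liftV M z) z
  rw [projL_liftV, real_inner_self_eq_norm_sq, real_inner_self_eq_norm_sq] at h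
  exact (sq_eq_sq₀ (norm_nonneg _) (norm_nonneg _)).1 h

theorem weakened_kinetic_vortex_line (N : ℕ) (hN : 4 ≤ N)
    (Ω : Set (EuclideanSpace ℝ (Fin N))) (hΩ : IsOpen Ω)
    (u : EuclideanSpace ℝ (Fin N) → EuclideanSpace ℝ (Fin N)) (hmeas : Measurable u)
    (hunit : ∀ᵐ x ∂volume.restrict Ω, ‖u x‖ = 1)
    (hkinW : ∀ ξ : EuclideanSpace ℝ (Fin N), ‖ξ‖ = 1 → ξ (⟨N - 1, by omega⟩ : Fin N) = 0 →
      ∀ v : EuclideanSpace ℝ (Fin N), ⟪v, ξ⟫ = 0 →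
        ∀ φ : EuclideanSpace ℝ (Fin N) → ℝ, ContDiff ℝ (⊤ : ℕ∞) φ → HasCompactSupport φ →
          tsupport φ ⊆ Ω →
          ∫ x in Ω, chi u x ξ * ⟪v, gradient φ x⟫ = 0)
    (hsym : ∀ k : Fin N, (k : ℕ) < N - 1 →
      ∀ φ : EuclideanSpace ℝ (Fin N) → ℝ, ContDiff ℝ (⊤ : ℕ∞) φ → HasCompactSupport φ →
        tsupport φ ⊆ Ω →
        ∫ x in Ω, (u x (⟨N - 1, by omega⟩ : Fin N) * fderiv ℝ φ x (EuclideanSpace.single k 1)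
          - u x k * fderiv ℝ φ x (EuclideanSpace.single (⟨N - 1, by omega⟩ : Fin N) 1)) = 0) :
    ∀ (c : EuclideanSpace ℝ (Fin N)) (ρ : ℝ), Metric.ball c ρ ⊆ Ω →
      (∀ᵐ x ∂volume.restrict (Metric.ball c ρ), 0 < ‖proj' N (u x)‖) →
      ((∃ w' : EuclideanSpace ℝ (Fin (N - 1)), ‖w'‖ = 1 ∧
          ∀ᵐ x ∂volume.restrict (Metric.ball c ρ),
            ‖proj' N (u x)‖⁻¹ • proj' N (u x) = w') ∨
       (∃ P' : EuclideanSpace ℝ (Fin (N - 1)), ∃ γ : ℝ, (γ = 1 ∨ γ = -1) ∧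
          ∀ᵐ x ∂volume.restrict (Metric.ball c ρ),
            ‖proj' N (u x)‖⁻¹ • proj' N (u x)
              = γ • (‖proj' N x - P'‖⁻¹ • (proj' N x - P')))) := by
  obtain ⟨M, rfl⟩ : ∃ M, N = M + 1 := ⟨N - 1, by omega⟩
  intro c ρ hBΩ hpos
  rcases eq_or_neBot (ae (volume.restrict (Metric.ball c ρ))) with hbot | hne
  · right
    refine ⟨0, 1, Or.inl rfl, ?_⟩
    unfold Filter.Eventually
    rw [hbot]
    exact Filter.mem_bot
  have hWm : Measurable fun x => projL M (u x) :=
    ((projL M).continuous_of_finiteDimensional.measurable).comp hmeas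
  obtain ⟨G, hG, hGp⟩ := good_set volume (Metric.ball c ρ) (convex_ball c ρ) isOpen_ball
    (fun x => projL M (u x)) hWm (projL M) (by
      intro ξ hξ v hv φ hφ hφc hφs
      have hξn : 0 < ‖ξ‖ := norm_pos_iff.2 hξ
      have h := hkinW (liftV M (‖ξ‖⁻¹ • ξ))
        (by rw [norm_liftV, norm_smul, norm_inv, norm_norm, inv_mul_cancel₀ hξn.ne'])
        (liftV_last M _) v
        (by rw [inner_liftV, inner_smul_right, hv, mul_zero]) φ hφ hφc (hφs.trans hBΩ)
      rw [setIntegral_eq_integral_of_forall_compl_eq_zero] at h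
      · refine Eq.trans ?_ h
        congr 1
        ext z
        have h1 : ⟪v, gradient φ z⟫ = fderiv ℝ φ z v := by
          rw [real_inner_comm, inner_gradient_left]
        rw [h1]
        congr 1
        have h2 : 0 < ⟪u z, liftV M (‖ξ‖⁻¹ • ξ)⟫ ↔ 0 < ⟪projL M (u z), ξ⟫ := by
          rw [inner_liftV, inner_smul_right]
          exact mul_pos_iff_of_pos_left (inv_pos.2 hξn)
        unfold chi
        simp only [h2, indicator, mem_ofPred_eq, Pi.one_apply]
      · intro z hz
        have h1 : ⟪v, gradient φ z⟫ = fderiv ℝ φ z v := by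
          rw [real_inner_comm, inner_gradient_left]
        rw [h1, fderiv_of_notMem_tsupport ℝ (fun h' => hz (hBΩ (hφs h')))]
        simp)
  exact geo volume (by simpa using (by omega : 3 ≤ M)) (projL M) (projL_surj M) (Metric.ball c ρ)
    (fun x => projL M (u x)) (G ∩ {x | projL M (u x) ≠ 0})
    (hG.and (hpos.mono fun x hx => norm_pos_iff.1 hx)) hne (fun x hx => hx.2)
    (fun x hx y hy => dep_of_no_sep _ _ _ (hGp x hx.1 y hy.1))
end
end
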